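/- arXiv:2103.08240 — 2 statements merged into one kernel-verified Lean document; each statement's English description precedes it below -/
import Mathlib

section
/- Let ψ be a Cartan–Hadamard model function. For every α > 0 there exists a global radial solution u with initial datum α; moreover, every global radial solution u satisfies u(r) > 0 for all r ≥ 0 and u′(r) < 0 for all r > 0. -/
open Real Filter MeasureTheory
open scoped ENNReal Topology

/-- The volume-to-surface ratio `Θ(r) = (∫₀ʳ ψ(s)^{n-1} ds) / ψ(r)^{n-1}`. -/
noncomputable def Theta (n : ℕ) (ψ : ℝ → ℝ) (r : ℝ) : ℝ :=
  (∫ s in (0:ℝ)..r, ψ s ^ (n - 1)) / ψ r ^ (n - 1)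

/-- A Cartan–Hadamard model function: smooth, `ψ(0)=0`, `ψ'(0)=1`, convex on `[0,∞)`,
positive on `(0,∞)`. -/
def IsCHModel (ψ : ℝ → ℝ) : Prop :=
  ContDiff ℝ (⊤ : ℕ∞) ψ ∧ ψ 0 = 0 ∧ deriv ψ 0 = 1 ∧
    (∀ r : ℝ, 0 ≤ r → 0 ≤ deriv (deriv ψ) r) ∧ (∀ r : ℝ, 0 < r → 0 < ψ r)

/-- A radial solution on `[0,T)` (with `T ∈ (0,∞]`) with initial datum `α`:
`u ∈ C¹([0,T))`, `u(0)=α`, `u'(0)=0`, `u>0` on `[0,T)`, and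
`(ψ^{n-1} |u'|^{p-2} u')' = -ψ^{n-1} u^q` on `(0,T)`. -/
structure IsRadialSolution (n : ℕ) (p q : ℝ) (ψ : ℝ → ℝ) (T : ℝ≥0∞) (α : ℝ)
    (u : ℝ → ℝ) : Prop where
  init : u 0 = α
  deriv_init : deriv u 0 = 0
  pos : ∀ r : ℝ, 0 ≤ r → ENNReal.ofReal r < T → 0 < u r
  diff : ∀ r : ℝ, 0 ≤ r → ENNReal.ofReal r < T → DifferentiableAt ℝ u r
  deriv_cont : ContinuousOn (deriv u) {r : ℝ | 0 ≤ r ∧ ENNReal.ofReal r < T}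
  eqn : ∀ r : ℝ, 0 < r → ENNReal.ofReal r < T →
    HasDerivAt (fun s => ψ s ^ (n - 1) * |deriv u s| ^ (p - 2) * deriv u s)
      (-(ψ r ^ (n - 1) * u r ^ q)) r

/-- The energy function `F_u(r) = ((p-1)/p)|u'(r)|^p + u(r)^{q+1}/(q+1)`. -/
noncomputable def energyF (p q : ℝ) (u : ℝ → ℝ) (r : ℝ) : ℝ :=
  (p - 1) / p * |deriv u r| ^ p + u r ^ (q + 1) / (q + 1)

/-- The Pohozaev function
`P_u(r) = (∫₀ʳ ψ^{n-1}) F_u(r) + (ψ(r)^{n-1}/(q+1)) |u'(r)|^{p-2} u'(r) u(r)`. -/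
noncomputable def pohozaevP (n : ℕ) (p q : ℝ) (ψ u : ℝ → ℝ) (r : ℝ) : ℝ :=
  (∫ s in (0:ℝ)..r, ψ s ^ (n - 1)) * energyF p q u r +
    ψ r ^ (n - 1) / (q + 1) * (|deriv u r| ^ (p - 2) * deriv u r * u r)

/-- `K(r) = ((p-1)/p + 1/(q+1)) ψ(r)^{n-1} - (n-1)(ψ'(r)/ψ(r)) ∫₀ʳ ψ^{n-1}`. -/
noncomputable def Kfun (n : ℕ) (p q : ℝ) (ψ : ℝ → ℝ) (r : ℝ) : ℝ :=
  ((p - 1) / p + 1 / (q + 1)) * ψ r ^ (n - 1) -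
    ((n : ℝ) - 1) * (deriv ψ r / ψ r) * ∫ s in (0:ℝ)..r, ψ s ^ (n - 1)

/-- Condition (a): `r^γ ψ'(r)/ψ(r) → ℓ ∈ (0,∞)` for some `γ ∈ [0,1)`. -/
def CondA (ψ : ℝ → ℝ) : Prop :=
  ∃ γ ℓ : ℝ, 0 ≤ γ ∧ γ < 1 ∧ 0 < ℓ ∧
    Tendsto (fun r : ℝ => r ^ γ * deriv ψ r / ψ r) atTop (nhds ℓ)

/-- Condition (b): `ψ'/ψ → +∞` and `(ψ/ψ') (log(ψ'/ψ))' → 0`. -/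
def CondB (ψ : ℝ → ℝ) : Prop :=
  Tendsto (fun r : ℝ => deriv ψ r / ψ r) atTop atTop ∧
    Tendsto (fun r : ℝ => ψ r / deriv ψ r *
      deriv (fun s : ℝ => Real.log (deriv ψ s / ψ s)) r) atTop (nhds 0)

/-- A radial weight: continuous, monotone, zero on `(-∞, 0]` and positive on `(0, ∞)`. -/
structure IsRadialWeight (w : ℝ → ℝ) : Prop where
  continuous : Continuous w
  monotone : Monotone w
  zero : ∀ r ≤ 0, w r = 0
  pos : ∀ r, 0 < r → 0 < w r

/-- The weighted primitive `∫₀ʳ w f`. -/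
noncomputable def weightedInt (w f : ℝ → ℝ) (r : ℝ) : ℝ := ∫ s in (0:ℝ)..r, w s * f s

/-- The weighted primitive divided by the weight. -/
noncomputable def radialFlux (w f : ℝ → ℝ) (r : ℝ) : ℝ := weightedInt w f r / w r

/-- The radial profile started at `α` whose slope is `-(radialFlux w f) ^ β`. -/
noncomputable def radialProfile (w : ℝ → ℝ) (β α : ℝ) (f : ℝ → ℝ) (r : ℝ) : ℝ :=
  α - ∫ s in (0:ℝ)..r, radialFlux w f s ^ β

section Volterra

/-- Fixed points of Volterra-type maps on continuous functions lying between two barriers. -/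
theorem exists_volterra_fixedPoint (lo L : ℝ → ℝ) (M : ℝ) (hlo : Continuous lo)
    (hlo0 : ∀ t, 0 ≤ lo t) (hloM : ∀ t, lo t ≤ M) (hL : Continuous L) (hL0 : ∀ t, 0 ≤ L t)
    (B : (ℝ → ℝ) → ℝ → ℝ)
    (hB : ∀ h, Continuous h → (∀ t, lo t ≤ h t ∧ h t ≤ M) →
      Continuous (B h) ∧ ∀ t, lo t ≤ B h t ∧ B h t ≤ M)
    (hBL : ∀ h k N : ℝ → ℝ, Continuous h → (∀ t, lo t ≤ h t ∧ h t ≤ M) →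
      Continuous k → (∀ t, lo t ≤ k t ∧ k t ≤ M) → Continuous N → Monotone N →
      (∀ t, |h t - k t| ≤ N t) →
      ∀ r, |B h r - B k r| ≤ ∫ s in (0:ℝ)..(max r 0), L s * N s) :
    ∃ h, Continuous h ∧ (∀ t, lo t ≤ h t ∧ h t ≤ M) ∧ B h = h := by
  set Λ : ℝ → ℝ := fun r => 2 * ∫ s in (0:ℝ)..(max r 0), L s with hΛ
  have hprim : Continuous fun r => ∫ s in (0:ℝ)..r, L s :=
    intervalIntegral.continuous_primitive (fun a b => hL.intervalIntegrable a b) 0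
  have hΛc : Continuous Λ := by
    have := hprim.comp (continuous_id.max continuous_const : Continuous fun r : ℝ => max r 0)
    exact continuous_const.mul this
  have hΛm : Monotone Λ := by
    intro a b hab
    have h1 : max a 0 ≤ max b 0 := max_le_max hab le_rfl
    have := intervalIntegral.integral_mono_interval (μ := volume) (f := L) le_rfl
      (le_max_right a 0) h1 (Eventually.of_forall hL0) (hL.intervalIntegrable _ _)
    simp only [hΛ]
    linarith
  have hΛ0 : ∀ r, 0 ≤ Λ r := fun r => by
    have := intervalIntegral.integral_nonneg (μ := volume) (f := L) (le_max_right r 0)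
      (fun s _ => hL0 s)
    simp only [hΛ]; linarith
  set trunc : (ℝ → ℝ) → ℝ → ℝ := fun v t => max (lo t) (min M (exp (Λ t) * v t)) with htrunc
  have htrunc_cont : ∀ v : ℝ → ℝ, Continuous v → Continuous (trunc v) := fun v hv => by
    simp only [htrunc]; fun_prop
  have htrunc_mem : ∀ (v : ℝ → ℝ) t, lo t ≤ trunc v t ∧ trunc v t ≤ M := fun v t =>
    ⟨le_max_left _ _, max_le (hloM t) (min_le_left _ _)⟩
  have key : ∀ v : BoundedContinuousFunction ℝ ℝ, ∃ v₂ : BoundedContinuousFunction ℝ ℝ,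
      ∀ t, v₂ t = exp (-Λ t) * B (trunc v) t := by
    intro v
    obtain ⟨h1, h2⟩ := hB (trunc v) 
      (htrunc_cont v v.continuous) (htrunc_mem v)
    refine ⟨BoundedContinuousFunction.ofNormedAddCommGroup
      (fun t => exp (-Λ t) * B (trunc v) t) (by fun_prop) M ?_, fun t => rfl⟩
    intro t
    have h3 : exp (-Λ t) ≤ 1 := exp_le_one_iff.2 (by linarith [hΛ0 t])
    have h4 : 0 ≤ B (trunc v) t := (hlo0 t).trans (h2 t).1
    rw [Real.norm_eq_abs, abs_of_nonneg (by positivity)]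
    nlinarith [(h2 t).2, exp_pos (-Λ t)]
  choose Φ hΦ using key
  have hcontr : ContractingWith (1/2) Φ := by
    refine ⟨by norm_num, LipschitzWith.of_dist_le_mul fun v v₂ => ?_⟩
    rw [BoundedContinuousFunction.dist_le (by positivity)]
    intro r
    set D := dist v v₂ with hD
    have hD0 : 0 ≤ D := dist_nonneg
    have h1 := hBL (trunc v) (trunc v₂) (fun t => D * exp (Λ t)) 
      (htrunc_cont v v.continuous) (htrunc_mem v)
      (htrunc_cont v₂ v₂.continuous) (htrunc_mem v₂) (by fun_prop)
      (fun a b hab => mul_le_mul_of_nonneg_left (exp_le_exp.2 (hΛm hab)) hD0)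
      (fun t => by
        have h5 : |exp (Λ t) * v t - exp (Λ t) * v₂ t| ≤ D * exp (Λ t) := by
          rw [← mul_sub, abs_mul, abs_of_pos (exp_pos _), mul_comm]
          have h6 := BoundedContinuousFunction.dist_coe_le_dist (f := v) (g := v₂) t
          rw [Real.dist_eq] at h6
          exact mul_le_mul_of_nonneg_right h6 (exp_pos _).le
        refine le_trans ?_ h5
        refine (abs_max_sub_max_le_max _ _ _ _).trans ?_
        rw [sub_self, abs_zero, max_eq_right (abs_nonneg _)]
        refine (abs_min_sub_min_le_max _ _ _ _).trans ?_
        rw [sub_self, abs_zero, max_eq_right (abs_nonneg _)]) r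
    have h2 : ∫ s in (0:ℝ)..(max r 0), L s * (D * exp (Λ s))
        = D / 2 * exp (Λ r) - D / 2 := by
      have hder : ∀ x : ℝ, HasDerivAt (fun x => D / 2 * exp (2 * ∫ s in (0:ℝ)..x, L s))
          (L x * (D * exp (2 * ∫ s in (0:ℝ)..x, L s))) x := fun x => by
        have := (hL.integral_hasStrictDerivAt 0 x).hasDerivAt
        exact ((this.const_mul 2).exp.const_mul (D / 2)).congr_deriv (by ring)
      have h3 : ∫ s in (0:ℝ)..(max r 0), L s * (D * exp (Λ s)) =
          ∫ s in (0:ℝ)..(max r 0), L s * (D * exp (2 * ∫ t in (0:ℝ)..s, L t)) := by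
        refine intervalIntegral.integral_congr fun s hs => ?_
        rw [Set.uIcc_of_le (le_max_right r 0)] at hs
        simp only [hΛ, max_eq_left hs.1]
      rw [h3, intervalIntegral.integral_eq_sub_of_hasDerivAt (fun x _ => hder x)]
      · simp [hΛ]
      · exact Continuous.intervalIntegrable (by fun_prop) _ _
    rw [h2] at h1
    rw [Real.dist_eq, hΦ, hΦ, ← mul_sub, abs_mul, abs_of_pos (exp_pos _)]
    calc exp (-Λ r) * |B (trunc v) r - B (trunc v₂) r|
        ≤ exp (-Λ r) * (D / 2 * exp (Λ r)) :=
          mul_le_mul_of_nonneg_left (by linarith) (exp_pos _).le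
      _ = D / 2 * (exp (-Λ r) * exp (Λ r)) := by ring
      _ = _ := by
        rw [← exp_add]
        simp
        ring
  obtain ⟨v, hv⟩ : ∃ v, Φ v = v := ⟨hcontr.fixedPoint, hcontr.fixedPoint_isFixedPt⟩
  have hfix : ∀ t, exp (Λ t) * v t = B (trunc v) t := fun t => by
    conv_lhs => rw [← hv, hΦ, ← mul_assoc, ← exp_add]
    simp
  have hb := hB (trunc v) 
      (htrunc_cont v v.continuous) (htrunc_mem v)
  have : B (trunc v) = trunc v := by
    funext t
    change _ = max (lo t) (min M (exp (Λ t) * v t))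
    rw [hfix t, min_eq_right (hb.2 t).2, max_eq_right (hb.2 t).1]
  exact ⟨trunc v, htrunc_cont v v.continuous, htrunc_mem v, this⟩

end Volterra

section Flux

variable {w : ℝ → ℝ}

theorem IsRadialWeight.nonneg (hw : IsRadialWeight w) (r : ℝ) : 0 ≤ w r := by
  rcases le_or_gt r 0 with h | h
  · rw [hw.zero r h]
  · exact (hw.pos r h).le

theorem IsRadialWeight.hasDerivAt_weightedInt (hw : IsRadialWeight w) {f : ℝ → ℝ}
    (hf : Continuous f) (r : ℝ) : HasDerivAt (weightedInt w f) (w r * f r) r :=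
  ((hw.continuous.mul hf).integral_hasStrictDerivAt 0 r).hasDerivAt

theorem IsRadialWeight.weightedInt_of_nonpos (hw : IsRadialWeight w) (f : ℝ → ℝ) {r : ℝ}
    (hr : r ≤ 0) : weightedInt w f r = 0 := by
  unfold weightedInt
  rw [intervalIntegral.integral_congr (g := fun _ => (0:ℝ)), intervalIntegral.integral_zero]
  intro s hs
  rw [Set.uIcc_of_ge hr] at hs
  simp [hw.zero s hs.2]

theorem IsRadialWeight.radialFlux_of_nonpos (hw : IsRadialWeight w) (f : ℝ → ℝ) {r : ℝ}
    (hr : r ≤ 0) : radialFlux w f r = 0 := by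
  simp [radialFlux, hw.weightedInt_of_nonpos f hr]

theorem IsRadialWeight.weightedInt_mono (hw : IsRadialWeight w) {f g : ℝ → ℝ}
    (hf : Continuous f) (hg : Continuous g) {r : ℝ} (hr : 0 ≤ r)
    (hfg : ∀ s, 0 ≤ s → s ≤ r → f s ≤ g s) : weightedInt w f r ≤ weightedInt w g r :=
  intervalIntegral.integral_mono_on hr ((hw.continuous.mul hf).intervalIntegrable _ _)
    ((hw.continuous.mul hg).intervalIntegrable _ _)
    fun s hs => mul_le_mul_of_nonneg_left (hfg s hs.1 hs.2) (hw.nonneg s)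

theorem weightedInt_const (w : ℝ → ℝ) (c r : ℝ) :
    weightedInt w (fun _ => c) r = c * weightedInt w (fun _ => 1) r := by
  simp [weightedInt, mul_comm]

theorem IsRadialWeight.weightedInt_pos (hw : IsRadialWeight w) {f : ℝ → ℝ}
    (hf : Continuous f) (hf0 : ∀ t, 0 < f t) {r : ℝ} (hr : 0 < r) : 0 < weightedInt w f r :=
  intervalIntegral.intervalIntegral_pos_of_pos_on
    ((hw.continuous.mul hf).intervalIntegrable _ _)
    (fun s hs => mul_pos (hw.pos s hs.1) (hf0 s)) hr

theorem IsRadialWeight.weightedInt_one_le (hw : IsRadialWeight w) {r : ℝ} (hr : 0 ≤ r) :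
    weightedInt w (fun _ => 1) r ≤ r * w r := by
  have := intervalIntegral.integral_mono_on (μ := volume) (f := w) (g := fun _ => w r) hr
    (hw.continuous.intervalIntegrable _ _) (by simp) (fun s hs => hw.monotone hs.2)
  simpa [weightedInt] using this

theorem IsRadialWeight.radialFlux_one_le (hw : IsRadialWeight w) {r : ℝ} (hr : 0 < r) :
    radialFlux w (fun _ => 1) r ≤ r :=
  (div_le_iff₀ (hw.pos r hr)).2 (hw.weightedInt_one_le hr.le)

theorem IsRadialWeight.radialFlux_bounds (hw : IsRadialWeight w) {f : ℝ → ℝ}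
    (hf : Continuous f) {c M r : ℝ} (hr : 0 < r) (hc : ∀ s, 0 ≤ s → s ≤ r → c ≤ f s)
    (hM : ∀ s, 0 ≤ s → s ≤ r → f s ≤ M) :
    c * radialFlux w (fun _ => 1) r ≤ radialFlux w f r ∧
      radialFlux w f r ≤ M * radialFlux w (fun _ => 1) r := by
  have hwr := hw.nonneg r
  unfold radialFlux
  rw [← mul_div_assoc, ← mul_div_assoc, ← weightedInt_const, ← weightedInt_const]
  exact ⟨div_le_div_of_nonneg_right (hw.weightedInt_mono continuous_const hf hr.le hc) hwr,
    div_le_div_of_nonneg_right (hw.weightedInt_mono hf continuous_const hr.le hM) hwr⟩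

theorem IsRadialWeight.radialFlux_nonneg (hw : IsRadialWeight w) {f : ℝ → ℝ}
    (hf0 : ∀ t, 0 ≤ f t) (r : ℝ) : 0 ≤ radialFlux w f r := by
  rcases le_or_gt r 0 with h | h
  · rw [hw.radialFlux_of_nonpos f h]
  · exact div_nonneg (intervalIntegral.integral_nonneg h.le
      fun s _ => mul_nonneg (hw.nonneg s) (hf0 s)) (hw.nonneg r)

theorem IsRadialWeight.radialFlux_le (hw : IsRadialWeight w) {f : ℝ → ℝ} (hf : Continuous f)
    {M : ℝ} (hM0 : 0 ≤ M) (hM : ∀ t, f t ≤ M) (r : ℝ) : radialFlux w f r ≤ M * max r 0 := by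
  rcases le_or_gt r 0 with h | h
  · rw [hw.radialFlux_of_nonpos f h, max_eq_right h, mul_zero]
  · have h1 := intervalIntegral.integral_mono_on (μ := volume) (f := fun s => w s * f s)
      (g := fun _ => w r * M) h.le
      ((hw.continuous.mul hf).intervalIntegrable _ _) (by simp)
      (fun s hs => (mul_le_mul_of_nonneg_left (hM s) (hw.nonneg s)).trans
        (mul_le_mul_of_nonneg_right (hw.monotone hs.2) hM0))
    rw [max_eq_left h.le, radialFlux, div_le_iff₀ (hw.pos r h)]
    refine h1.trans (le_of_eq ?_)
    simp
    ring

theorem IsRadialWeight.continuous_radialFlux (hw : IsRadialWeight w) {f : ℝ → ℝ}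
    (hf : Continuous f) (hf0 : ∀ t, 0 ≤ f t) {M : ℝ} (hM : ∀ t, f t ≤ M) :
    Continuous (radialFlux w f) := by
  rw [continuous_iff_continuousAt]
  intro r
  rcases le_or_gt r 0 with h | h
  · have h1 : Tendsto (fun s : ℝ => M * max s 0) (𝓝 r) (𝓝 0) := by
      have : Continuous fun s : ℝ => M * max s 0 := by fun_prop
      have := this.tendsto r
      rwa [max_eq_right h, mul_zero] at this
    rw [ContinuousAt, hw.radialFlux_of_nonpos f h]
    exact tendsto_of_tendsto_of_tendsto_of_le_of_le tendsto_const_nhds h1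
      (hw.radialFlux_nonneg hf0) (hw.radialFlux_le hf ((hf0 0).trans (hM 0)) hM)
  · exact (hw.hasDerivAt_weightedInt hf r).continuousAt.div hw.continuous.continuousAt
      (hw.pos r h).ne'

theorem IsRadialWeight.hasDerivAt_radialProfile (hw : IsRadialWeight w) {f : ℝ → ℝ}
    (hf : Continuous f) (hf0 : ∀ t, 0 ≤ f t) {M : ℝ} (hM : ∀ t, f t ≤ M) {β : ℝ} (hβ : 0 < β)
    (α r : ℝ) : HasDerivAt (radialProfile w β α f) (-(radialFlux w f r ^ β)) r := by
  have hc : Continuous fun s => radialFlux w f s ^ β :=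
    (hw.continuous_radialFlux hf hf0 hM).rpow_const fun _ => Or.inr hβ.le
  exact ((hc.integral_hasStrictDerivAt 0 r).hasDerivAt).const_sub α

theorem IsRadialWeight.radialProfile_of_nonpos (hw : IsRadialWeight w) (f : ℝ → ℝ) {β : ℝ}
    (hβ : 0 < β) (α : ℝ) {r : ℝ} (hr : r ≤ 0) : radialProfile w β α f r = α := by
  unfold radialProfile
  rw [intervalIntegral.integral_congr (g := fun _ => (0:ℝ)), intervalIntegral.integral_zero,
    sub_zero]
  intro s hs
  rw [Set.uIcc_of_ge hr] at hs
  simp [hw.radialFlux_of_nonpos f hs.2, hβ.ne']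

theorem IsRadialWeight.radialProfile_le (hw : IsRadialWeight w) {f : ℝ → ℝ}
    (hf0 : ∀ t, 0 ≤ f t) {β : ℝ} (hβ : 0 < β) (α r : ℝ) : radialProfile w β α f r ≤ α := by
  rcases le_or_gt r 0 with h | h
  · exact (hw.radialProfile_of_nonpos f hβ α h).le
  · have := intervalIntegral.integral_nonneg (μ := volume) (f := fun s => radialFlux w f s ^ β)
      h.le (fun s _ => rpow_nonneg (hw.radialFlux_nonneg hf0 s) β)
    unfold radialProfile
    linarith

theorem IsRadialWeight.le_radialProfile (hw : IsRadialWeight w) {f : ℝ → ℝ}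
    (hf : Continuous f) (hf0 : ∀ t, 0 ≤ f t) {M : ℝ} (hM : ∀ t, f t ≤ M) {β : ℝ} (hβ : 0 < β)
    (α : ℝ) {r : ℝ} (hr : 0 ≤ r) : α - r * (M * r) ^ β ≤ radialProfile w β α f r := by
  have hM0 : 0 ≤ M := (hf0 0).trans (hM 0)
  have hc : Continuous fun s => radialFlux w f s ^ β :=
    (hw.continuous_radialFlux hf hf0 hM).rpow_const fun _ => Or.inr hβ.le
  have h1 := intervalIntegral.integral_mono_on (μ := volume)
    (f := fun s => radialFlux w f s ^ β) (g := fun _ => (M * r) ^ β) hr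
    (hc.intervalIntegrable _ _) (by simp)
    (fun s hs => rpow_le_rpow (hw.radialFlux_nonneg hf0 s)
      ((hw.radialFlux_le hf hM0 hM s).trans
        (mul_le_mul_of_nonneg_left (max_le hs.2 hr) hM0)) hβ.le)
  unfold radialProfile
  simp at h1
  linarith

end Flux

section Truncated

variable {w : ℝ → ℝ}

theorem abs_rpow_sub_rpow_le_of_mem_Icc {a b x y β : ℝ} (ha : 0 < a) (hβ : 0 ≤ β)
    (hx : x ∈ Set.Icc a b) (hy : y ∈ Set.Icc a b) :
    |x ^ β - y ^ β| ≤ β * (a ^ (β - 1) + b ^ (β - 1)) * |x - y| := by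
  have h := Convex.norm_image_sub_le_of_norm_hasDerivWithin_le (s := Set.Icc a b)
    (f := fun t : ℝ => t ^ β) (f' := fun t => β * t ^ (β - 1))
    (C := β * (a ^ (β - 1) + b ^ (β - 1)))
    (fun t ht => (hasDerivAt_rpow_const (Or.inl (ha.trans_le ht.1).ne')).hasDerivWithinAt)
    (fun t ht => ?_) (convex_Icc a b) hy hx
  · simpa [Real.norm_eq_abs] using h
  · have ht0 : 0 < t := ha.trans_le ht.1
    have hb : 0 < b := ht0.trans_le ht.2
    rw [Real.norm_eq_abs, abs_of_nonneg (by positivity)]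
    refine mul_le_mul_of_nonneg_left ?_ hβ
    rcases le_total 0 (β - 1) with h1 | h1
    · have := rpow_le_rpow ht0.le ht.2 h1
      have := rpow_pos_of_pos ha (β - 1)
      linarith
    · have := rpow_le_rpow_of_nonpos ha ht.1 h1
      have := rpow_pos_of_pos hb (β - 1)
      linarith

theorem IsRadialWeight.radialFlux_le_add (hw : IsRadialWeight w) {f g : ℝ → ℝ}
    (hf : Continuous f) (hg : Continuous g) {D r : ℝ} (hr : 0 < r)
    (hfg : ∀ s, 0 ≤ s → s ≤ r → f s ≤ g s + D) :
    radialFlux w f r ≤ radialFlux w g r + D * radialFlux w (fun _ => 1) r := by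
  have h1 := hw.weightedInt_mono hf (hg.add continuous_const) hr.le hfg
  have h2 : weightedInt w (fun s => g s + D) r =
      weightedInt w g r + D * weightedInt w (fun _ => 1) r := by
    rw [← weightedInt_const]
    unfold weightedInt
    simp only [mul_add]
    exact intervalIntegral.integral_add ((hw.continuous.mul hg).intervalIntegrable _ _)
      ((hw.continuous.mul continuous_const).intervalIntegrable _ _)
  unfold radialFlux
  rw [← mul_div_assoc, ← add_div]
  exact div_le_div_of_nonneg_right (h1.trans h2.le) (hw.nonneg r)

theorem IsRadialWeight.abs_radialFlux_rpow_sub_le (hw : IsRadialWeight w) {f g : ℝ → ℝ}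
    (hf : Continuous f) (hg : Continuous g) {c M D r β : ℝ} (hβ : 0 < β) (hr : 0 < r)
    (hc : 0 < c) (hfb : ∀ s, 0 ≤ s → s ≤ r → f s ∈ Set.Icc c M)
    (hgb : ∀ s, 0 ≤ s → s ≤ r → g s ∈ Set.Icc c M)
    (hfg : ∀ s, 0 ≤ s → s ≤ r → |f s - g s| ≤ D) :
    |radialFlux w f r ^ β - radialFlux w g r ^ β| ≤
      r ^ β * (β * (c ^ (β - 1) + M ^ (β - 1)) * D) := by
  have hΘle := hw.radialFlux_one_le hr
  set Θ := radialFlux w (fun _ => 1) r with hΘ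
  have hΘ0 : 0 < Θ := div_pos
    (hw.weightedInt_pos continuous_const (fun _ => one_pos) hr) (hw.pos r hr)
  have hM : 0 < M := hc.trans_le ((hfb 0 le_rfl hr.le).1.trans (hfb 0 le_rfl hr.le).2)
  have bf := hw.radialFlux_bounds hf hr (fun s h1 h2 => (hfb s h1 h2).1)
    (fun s h1 h2 => (hfb s h1 h2).2)
  have bg := hw.radialFlux_bounds hg hr (fun s h1 h2 => (hgb s h1 h2).1)
    (fun s h1 h2 => (hgb s h1 h2).2)
  have d1 := hw.radialFlux_le_add hf hg hr
    (fun s h1 h2 => by linarith [(abs_le.1 (hfg s h1 h2)).2] : ∀ s, 0 ≤ s → s ≤ r → f s ≤ g s + D)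
  have d2 := hw.radialFlux_le_add hg hf hr
    (fun s h1 h2 => by linarith [(abs_le.1 (hfg s h1 h2)).1] : ∀ s, 0 ≤ s → s ≤ r → g s ≤ f s + D)
  rw [← hΘ] at bf bg d1 d2
  obtain ⟨a, ha⟩ : ∃ a, radialFlux w f r = Θ * a := ⟨radialFlux w f r / Θ, by field_simp⟩
  obtain ⟨b, hb⟩ : ∃ b, radialFlux w g r = Θ * b := ⟨radialFlux w g r / Θ, by field_simp⟩
  rw [ha] at bf d1 d2
  rw [hb] at bg d1 d2
  have ha' : a ∈ Set.Icc c M := ⟨by nlinarith [bf.1], by nlinarith [bf.2]⟩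
  have hb' : b ∈ Set.Icc c M := ⟨by nlinarith [bg.1], by nlinarith [bg.2]⟩
  have hab : |a - b| ≤ D := abs_le.2 ⟨by nlinarith, by nlinarith⟩
  have hD : 0 ≤ D := (abs_nonneg _).trans hab
  rw [ha, hb, mul_rpow hΘ0.le (hc.le.trans ha'.1), mul_rpow hΘ0.le (hc.le.trans hb'.1), ← mul_sub,
    abs_mul, abs_of_pos (rpow_pos_of_pos hΘ0 β)]
  refine mul_le_mul (rpow_le_rpow hΘ0.le hΘle hβ.le) ?_ (abs_nonneg _) (by positivity)
  exact (abs_rpow_sub_rpow_le_of_mem_Icc hc hβ.le ha' hb').trans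
    (mul_le_mul_of_nonneg_left hab (by positivity))

/-- Existence for the radial equation truncated from below at a positive barrier `δ`. -/
theorem IsRadialWeight.exists_truncated_profile (hw : IsRadialWeight w) {β q α : ℝ}
    (hβ : 0 < β) (hq : 0 < q) {δ : ℝ → ℝ} (hδ : Continuous δ) (hδm : Antitone δ)
    (hδ0 : ∀ t, 0 < δ t) (hδα : ∀ t, δ t ≤ α) :
    ∃ h : ℝ → ℝ, Continuous h ∧ (∀ t, δ t ≤ h t ∧ h t ≤ α) ∧
      ∀ r, h r = max (δ r) (radialProfile w β α (fun s => h s ^ q) r) := by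
  have hα : 0 < α := (hδ0 0).trans_le (hδα 0)
  have hfc : ∀ h : ℝ → ℝ, Continuous h → Continuous fun s => h s ^ q :=
    fun h hh => hh.rpow_const fun _ => Or.inr hq.le
  have hf0 : ∀ h : ℝ → ℝ, (∀ t, δ t ≤ h t ∧ h t ≤ α) → ∀ t, 0 ≤ h t ^ q :=
    fun h hh t => rpow_nonneg ((hδ0 t).le.trans (hh t).1) q
  have hfM : ∀ h : ℝ → ℝ, (∀ t, δ t ≤ h t ∧ h t ≤ α) → ∀ t, h t ^ q ≤ α ^ q :=
    fun h hh t => rpow_le_rpow ((hδ0 t).le.trans (hh t).1) (hh t).2 hq.le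
  set L : ℝ → ℝ := fun s => (max s 0) ^ β *
    (β * ((δ s ^ q) ^ (β - 1) + (α ^ q) ^ (β - 1)) * (q * (δ s ^ (q - 1) + α ^ (q - 1))))
    with hL
  have hLc : Continuous L := by
    have h1 : Continuous fun s : ℝ => (max s 0) ^ β :=
      (continuous_id.max continuous_const).rpow_const fun _ => Or.inr hβ.le
    have h2 : Continuous fun s => (δ s ^ q) ^ (β - 1) :=
      (hfc δ hδ).rpow_const fun s => Or.inl (rpow_pos_of_pos (hδ0 s) q).ne'
    have h3 : Continuous fun s => δ s ^ (q - 1) :=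
      hδ.rpow_const fun s => Or.inl (hδ0 s).ne'
    exact h1.mul ((continuous_const.mul (h2.add continuous_const)).mul
      (continuous_const.mul (h3.add continuous_const)))
  have hL0 : ∀ s, 0 ≤ L s := fun s => by
    have := hδ0 s
    have : 0 ≤ max s 0 := le_max_right _ _
    simp only [hL]
    positivity
  refine (exists_volterra_fixedPoint δ L α hδ (fun t => (hδ0 t).le) hδα
    hLc hL0 (fun h r => max (δ r) (radialProfile w β α (fun s => h s ^ q) r)) ?_ ?_).imp
    fun h hh => ⟨hh.1, hh.2.1, fun r => (congrFun hh.2.2 r).symm⟩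
  · intro h hh hb
    refine ⟨hδ.max (continuous_iff_continuousAt.2 fun r => (hw.hasDerivAt_radialProfile
      (hfc h hh) (hf0 h hb) (hfM h hb) hβ α r).continuousAt), fun t => ⟨le_max_left _ _,
      max_le (hδα t) (hw.radialProfile_le (hf0 h hb) hβ α t)⟩⟩
  · intro h k N hh hb hk kb hN hNm hhk r
    refine (abs_max_sub_max_le_max _ _ _ _).trans ?_
    rw [sub_self, abs_zero, max_eq_right (abs_nonneg _)]
    rcases le_or_gt r 0 with hr | hr
    · rw [hw.radialProfile_of_nonpos _ hβ α hr, hw.radialProfile_of_nonpos _ hβ α hr,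
        max_eq_right hr]
      simp
    · have ch : Continuous fun s => radialFlux w (fun t => h t ^ q) s ^ β :=
        (hw.continuous_radialFlux (hfc h hh) (hf0 h hb) (hfM h hb)).rpow_const
          fun _ => Or.inr hβ.le
      have ck : Continuous fun s => radialFlux w (fun t => k t ^ q) s ^ β :=
        (hw.continuous_radialFlux (hfc k hk) (hf0 k kb) (hfM k kb)).rpow_const
          fun _ => Or.inr hβ.le
      rw [max_eq_left hr.le]
      unfold radialProfile
      rw [sub_sub_sub_cancel_left, ← intervalIntegral.integral_sub
        (ck.intervalIntegrable _ _) (ch.intervalIntegrable _ _), ← Real.norm_eq_abs]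
      refine intervalIntegral.norm_integral_le_of_norm_le hr.le (ae_of_all _ ?_)
        ((hLc.mul hN).intervalIntegrable _ _)
      intro s hs
      have hs0 : 0 < s := hs.1
      have hmem : ∀ g : ℝ → ℝ, (∀ t, δ t ≤ g t ∧ g t ≤ α) → ∀ t, t ≤ s →
          g t ∈ Set.Icc (δ s) α := fun g hg t ht => ⟨(hδm ht).trans (hg t).1, (hg t).2⟩
      have hmemq : ∀ g : ℝ → ℝ, (∀ t, δ t ≤ g t ∧ g t ≤ α) → ∀ t, 0 ≤ t → t ≤ s →
          g t ^ q ∈ Set.Icc (δ s ^ q) (α ^ q) := fun g hg t _ ht =>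
        ⟨rpow_le_rpow (hδ0 s).le (hmem g hg t ht).1 hq.le, hfM g hg t⟩
      have hmain := hw.abs_radialFlux_rpow_sub_le (hfc k hk) (hfc h hh)
        (D := q * (δ s ^ (q - 1) + α ^ (q - 1)) * N s) hβ hs0
        (rpow_pos_of_pos (hδ0 s) q) (hmemq k kb) (hmemq h hb) (fun t _ ht => by
          refine (abs_rpow_sub_rpow_le_of_mem_Icc (hδ0 s) hq.le (hmem k kb t ht)
            (hmem h hb t ht)).trans (mul_le_mul_of_nonneg_left ?_ ?_)
          · rw [abs_sub_comm]
            exact (hhk t).trans (hNm ht)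
          · have := hδ0 s
            positivity)
      rw [Real.norm_eq_abs]
      refine hmain.trans (le_of_eq ?_)
      simp only [hL, max_eq_left hs0.le]
      ring

end Truncated

section Pohozaev

variable {w w' : ℝ → ℝ}

/-- The Pohozaev estimate: the slope of a positive solution is controlled by its value. -/
theorem IsRadialWeight.slope_mul_weightedInt_le (hw : IsRadialWeight w) {β q α : ℝ}
    (hβ : 0 < β) (hq : 0 < q)
    (hder : ∀ r, 0 < r → HasDerivAt w (w' r) r)
    (hK : ∀ r, 0 < r →
      (1 / (1 + β) + 1 / (q + 1)) * w r ^ 2 ≤ w' r * weightedInt w (fun _ => 1) r)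
    {h : ℝ → ℝ} (hh : Continuous h) (hh0 : ∀ t, 0 < h t) (hhα : ∀ t, h t ≤ α) {R : ℝ}
    (heq : ∀ r, 0 < r → r < R → radialProfile w β α (fun s => h s ^ q) r = h r)
    {r : ℝ} (hr : 0 < r) (hrR : r < R) :
    radialFlux w (fun s => h s ^ q) r ^ β * weightedInt w (fun _ => 1) r ≤
      (1 + β) / (q + 1) * w r * h r := by
  set f : ℝ → ℝ := fun s => h s ^ q with hf
  set u := radialProfile w β α f with hu
  set V := weightedInt w (fun _ => 1) with hV
  set W := weightedInt w f with hW
  set Z := radialFlux w f with hZ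
  have hfc : Continuous f := hh.rpow_const fun _ => Or.inr hq.le
  have hf0 : ∀ t, 0 < f t := fun t => rpow_pos_of_pos (hh0 t) q
  have hfM : ∀ t, f t ≤ α ^ q := fun t => rpow_le_rpow (hh0 t).le (hhα t) hq.le
  have hud : ∀ r, HasDerivAt u (-(Z r ^ β)) r :=
    hw.hasDerivAt_radialProfile hfc (fun t => (hf0 t).le) hfM hβ α
  have hVd : ∀ r, HasDerivAt V (w r) r := fun r => by
    simpa using hw.hasDerivAt_weightedInt (continuous_const (y := (1:ℝ))) r
  have hWd : ∀ r, HasDerivAt W (w r * f r) r := hw.hasDerivAt_weightedInt hfc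
  have hZc : Continuous Z := hw.continuous_radialFlux hfc (fun t => (hf0 t).le) hfM
  have huc : Continuous u := continuous_iff_continuousAt.2 fun r => (hud r).continuousAt
  have hVc : Continuous V := continuous_iff_continuousAt.2 fun r => (hVd r).continuousAt
  have hWc : Continuous W := continuous_iff_continuousAt.2 fun r => (hWd r).continuousAt
  set P : ℝ → ℝ := fun r => V r * (1 / (1 + β) * Z r ^ (1 + β) + 1 / (q + 1) * u r ^ (q + 1))
    - 1 / (q + 1) * (W r * u r) with hP
  have hPc : Continuous P := by
    have h1 : Continuous fun r => Z r ^ (1 + β) := hZc.rpow_const fun _ => Or.inr (by linarith)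
    have h2 : Continuous fun r => u r ^ (q + 1) := huc.rpow_const fun _ => Or.inr (by linarith)
    simp only [hP]
    fun_prop
  have hWZ : ∀ s, 0 < s → W s = Z s * w s := fun s hs => by
    have := (hw.pos s hs).ne'
    simp only [hZ, radialFlux, hW]
    field_simp
  have hZpos : ∀ s, 0 < s → 0 < Z s := fun s hs =>
    div_pos (hw.weightedInt_pos hfc hf0 hs) (hw.pos s hs)
  have hPd : ∀ s, 0 < s → s < R →
      HasDerivAt P (Z s * Z s ^ β * ((1 / (1 + β) + 1 / (q + 1)) * w s - w' s * V s / w s)) s := by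
    intro s hs hsR
    have hws := hw.pos s hs
    have hus : u s = h s := heq s hs hsR
    have hu0 : 0 < u s := hus ▸ hh0 s
    have hfu : f s = u s ^ q := by rw [hus]
    have hZd : HasDerivAt Z (f s - Z s * w' s / w s) s := by
      refine ((hWd s).div (hder s hs) hws.ne').congr_deriv ?_
      rw [hWZ s hs]
      field_simp
    have h1 := hZd.rpow_const (p := 1 + β) (Or.inl (hZpos s hs).ne')
    have h2 := (hud s).rpow_const (p := q + 1) (Or.inl hu0.ne')
    have h3 := ((hVd s).mul ((h1.const_mul (1 / (1 + β))).add (h2.const_mul (1 / (q + 1))))).sub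
      (((hWd s).mul (hud s)).const_mul (1 / (q + 1)))
    refine h3.congr_deriv ?_
    have e1 : Z s ^ (1 + β) = Z s * Z s ^ β := by rw [rpow_add (hZpos s hs), rpow_one]
    have e2 : u s ^ (q + 1) = u s ^ q * u s := by rw [rpow_add hu0, rpow_one]
    simp only [Pi.add_apply, e1, e2, add_sub_cancel_left, add_sub_cancel_right, hWZ s hs, hfu]
    have hβ1 : 1 + β ≠ 0 := by linarith
    have hq1 : q + 1 ≠ 0 := by linarith
    field_simp
    ring
  have hPle : P r ≤ P 0 := by
    have hanti : AntitoneOn P (Set.Icc 0 r) := by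
      refine antitoneOn_of_hasDerivWithinAt_nonpos (convex_Icc 0 r) hPc.continuousOn
        (f' := fun s => Z s * Z s ^ β *
          ((1 / (1 + β) + 1 / (q + 1)) * w s - w' s * V s / w s)) ?_ ?_
      · intro s hs
        rw [interior_Icc] at hs
        exact (hPd s hs.1 (hs.2.trans hrR)).hasDerivWithinAt
      · intro s hs
        rw [interior_Icc] at hs
        have hws := hw.pos s hs.1
        have hZs := hZpos s hs.1
        refine mul_nonpos_of_nonneg_of_nonpos (by positivity) ?_
        rw [sub_nonpos, le_div_iff₀ hws, mul_assoc, ← sq]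
        exact hK s hs.1
    exact hanti ⟨le_rfl, hr.le⟩ ⟨hr.le, le_rfl⟩ hr.le
  have hP0 : P 0 = 0 := by
    simp [hP, hV, hW, weightedInt]
  rw [hP0] at hPle
  have hur : u r = h r := heq r hr hrR
  have hV0 : 0 < V r := hw.weightedInt_pos continuous_const (fun _ => one_pos) hr
  have hZr := hZpos r hr
  have hhr := hh0 r
  have e1 : Z r ^ (1 + β) = Z r * Z r ^ β := by rw [rpow_add hZr, rpow_one]
  have hnn : 0 ≤ V r * (1 / (q + 1) * h r ^ (q + 1)) := by positivity
  simp only [hP, hur, e1, hWZ r hr] at hPle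
  have hfin : Z r * (1 / (1 + β) * (Z r ^ β * V r)) ≤ Z r * (1 / (q + 1) * (w r * h r)) := by
    linarith
  have := le_of_mul_le_mul_left hfin hZr
  calc Z r ^ β * V r = (1 + β) * (1 / (1 + β) * (Z r ^ β * V r)) := by field_simp
    _ ≤ (1 + β) * (1 / (q + 1) * (w r * h r)) :=
      mul_le_mul_of_nonneg_left this (by linarith)
    _ = _ := by ring

theorem IsRadialWeight.profile_mul_rpow_weightedInt_le (hw : IsRadialWeight w) {β q α : ℝ}
    (hβ : 0 < β) (hq : 0 < q)
    (hder : ∀ r, 0 < r → HasDerivAt w (w' r) r)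
    (hK : ∀ r, 0 < r →
      (1 / (1 + β) + 1 / (q + 1)) * w r ^ 2 ≤ w' r * weightedInt w (fun _ => 1) r)
    {h : ℝ → ℝ} (hh : Continuous h) (hh0 : ∀ t, 0 < h t) (hhα : ∀ t, h t ≤ α) {R : ℝ}
    (heq : ∀ r, 0 < r → r < R → radialProfile w β α (fun s => h s ^ q) r = h r)
    {a : ℝ} (ha : 0 < a) (haR : a ≤ R) :
    radialProfile w β α (fun s => h s ^ q) a *
        weightedInt w (fun _ => 1) a ^ ((1 + β) / (q + 1)) ≤
      radialProfile w β α (fun s => h s ^ q) R *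
        weightedInt w (fun _ => 1) R ^ ((1 + β) / (q + 1)) := by
  have hslope := fun r hr hrR =>
    hw.slope_mul_weightedInt_le (r := r) hβ hq hder hK hh hh0 hhα heq hr hrR
  set f : ℝ → ℝ := fun s => h s ^ q with hf
  set u := radialProfile w β α f with hu
  set V := weightedInt w (fun _ => 1) with hV
  set C := (1 + β) / (q + 1) with hC
  have hC0 : 0 < C := by positivity
  have hud : ∀ r, HasDerivAt u (-(radialFlux w f r ^ β)) r :=
    hw.hasDerivAt_radialProfile (hh.rpow_const fun _ => Or.inr hq.le)
      (fun t => (rpow_pos_of_pos (hh0 t) q).le)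
      (fun t => rpow_le_rpow (hh0 t).le (hhα t) hq.le) hβ α
  have hVd : ∀ r, HasDerivAt V (w r) r := fun r => by
    simpa using hw.hasDerivAt_weightedInt (continuous_const (y := (1:ℝ))) r
  have hVpos : ∀ r, 0 < r → 0 < V r := fun r hr =>
    hw.weightedInt_pos continuous_const (fun _ => one_pos) hr
  have hd : ∀ r, 0 < r → HasDerivAt (fun s => u s * V s ^ C)
      (-(radialFlux w f r ^ β) * V r ^ C + u r * (w r * C * V r ^ (C - 1))) r := fun r hr =>
    (hud r).mul ((hVd r).rpow_const (Or.inl (hVpos r hr).ne'))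
  have hmono : MonotoneOn (fun s => u s * V s ^ C) (Set.Icc a R) := by
    refine monotoneOn_of_hasDerivWithinAt_nonneg (convex_Icc a R)
      (fun r hr => (hd r (ha.trans_le hr.1)).continuousAt.continuousWithinAt)
      (f' := fun r => -(radialFlux w f r ^ β) * V r ^ C + u r * (w r * C * V r ^ (C - 1))) ?_ ?_
    · intro r hr
      rw [interior_Icc] at hr
      exact (hd r (ha.trans hr.1)).hasDerivWithinAt
    · intro r hr
      rw [interior_Icc] at hr
      have hr0 := ha.trans hr.1
      have h1 := hslope r hr0 hr.2
      have h2 := heq r hr0 hr.2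
      have h3 := rpow_pos_of_pos (hVpos r hr0) (C - 1)
      have h4 : V r ^ C = V r ^ (C - 1) * V r := by
        rw [← rpow_add_one (hVpos r hr0).ne', sub_add_cancel]
      rw [h4, h2]
      have : 0 ≤ V r ^ (C - 1) * (C * w r * h r - radialFlux w f r ^ β * V r) :=
        mul_nonneg h3.le (by linarith)
      linarith
  exact hmono ⟨le_rfl, haR⟩ ⟨haR, le_rfl⟩ haR

end Pohozaev

section Existence

variable {w w' : ℝ → ℝ}

/-- Global existence of positive profiles under the Pohozaev condition on the weight. -/
theorem IsRadialWeight.exists_positive_profile (hw : IsRadialWeight w) {β q α : ℝ}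
    (hβ : 0 < β) (hq : 0 < q) (hα : 0 < α)
    (hder : ∀ r, 0 < r → HasDerivAt w (w' r) r)
    (hK : ∀ r, 0 < r →
      (1 / (1 + β) + 1 / (q + 1)) * w r ^ 2 ≤ w' r * weightedInt w (fun _ => 1) r) :
    ∃ u : ℝ → ℝ, Continuous u ∧ (∀ t, 0 < u t ∧ u t ≤ α) ∧
      radialProfile w β α (fun s => u s ^ q) = u := by
  obtain ⟨a, ha0, ha⟩ : ∃ a > 0, a * (α ^ q * a) ^ β ≤ α / 2 := by
    have hc : Continuous fun a : ℝ => a * (α ^ q * a) ^ β :=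
      continuous_id.mul ((continuous_const.mul continuous_id).rpow_const fun _ => Or.inr hβ.le)
    have h1 : ∀ᶠ a in 𝓝 (0:ℝ), a * (α ^ q * a) ^ β < α / 2 :=
      hc.continuousAt.eventually_lt continuousAt_const (by simpa using hα)
    obtain ⟨a, h2, h3⟩ := ((h1.filter_mono nhdsWithin_le_nhds).and
      (self_mem_nhdsWithin : Set.Ioi (0:ℝ) ∈ 𝓝[>] 0)).exists
    exact ⟨a, h3, h2.le⟩
  set V := weightedInt w (fun _ => 1) with hV
  set C := (1 + β) / (q + 1) with hC
  have hC0 : 0 < C := by positivity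
  have hVpos : ∀ r, 0 < r → 0 < V r := fun r hr =>
    hw.weightedInt_pos continuous_const (fun _ => one_pos) hr
  have hVd : ∀ r, HasDerivAt V (w r) r := fun r => by
    simpa using hw.hasDerivAt_weightedInt (continuous_const (y := (1:ℝ))) r
  have hVm : Monotone V := monotone_of_deriv_nonneg (fun r => (hVd r).differentiableAt)
    fun r => by rw [(hVd r).deriv]; exact hw.nonneg r
  have hVc : Continuous V := continuous_iff_continuousAt.2 fun r => (hVd r).continuousAt
  have hpos : ∀ r, 0 < V (max r a) ^ C := fun r =>
    rpow_pos_of_pos (hVpos _ (lt_max_of_lt_right ha0)) C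
  have hVa : 0 < V a ^ C := rpow_pos_of_pos (hVpos a ha0) C
  set δ : ℝ → ℝ := fun r => α / 4 * (V a ^ C / V (max r a) ^ C) with hδ
  have hδc : Continuous δ := by
    have h1 : Continuous fun r => V (max r a) ^ C :=
      (hVc.comp (continuous_id.max continuous_const)).rpow_const fun _ => Or.inr hC0.le
    exact continuous_const.mul (continuous_const.div h1 fun r => (hpos r).ne')
  have hδm : Antitone δ := fun r s hrs => by
    refine mul_le_mul_of_nonneg_left (div_le_div_of_nonneg_left hVa.le (hpos r) ?_) (by positivity)
    exact rpow_le_rpow (hVpos _ (lt_max_of_lt_right ha0)).le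
      (hVm (max_le_max hrs le_rfl)) hC0.le
  have hδ0 : ∀ r, 0 < δ r := fun r => mul_pos (by positivity) (div_pos hVa (hpos r))
  have hδ4 : ∀ r, δ r ≤ α / 4 := fun r => by
    have : V a ^ C / V (max r a) ^ C ≤ 1 := (div_le_one (hpos r)).2
      (rpow_le_rpow (hVpos a ha0).le (hVm (le_max_right r a)) hC0.le)
    simp only [hδ]
    nlinarith
  obtain ⟨h, hh, hb, hfix⟩ := hw.exists_truncated_profile (α := α) hβ hq hδc hδm hδ0
    (fun t => (hδ4 t).trans (by linarith))
  set f : ℝ → ℝ := fun s => h s ^ q with hf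
  set u := radialProfile w β α f with hu
  have hh0 : ∀ t, 0 < h t := fun t => (hδ0 t).trans_le (hb t).1
  have hfc : Continuous f := hh.rpow_const fun _ => Or.inr hq.le
  have hf0 : ∀ t, 0 ≤ f t := fun t => rpow_nonneg (hh0 t).le q
  have hfM : ∀ t, f t ≤ α ^ q := fun t => rpow_le_rpow (hh0 t).le (hb t).2 hq.le
  have huc : Continuous u := continuous_iff_continuousAt.2 fun r =>
    (hw.hasDerivAt_radialProfile hfc hf0 hfM hβ α r).continuousAt
  have hsmall : ∀ r, r ≤ a → α / 2 ≤ u r := by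
    intro r hr
    rcases le_or_gt r 0 with h0 | h0
    · rw [hu, hw.radialProfile_of_nonpos f hβ α h0]
      linarith
    · have h1 := hw.le_radialProfile hfc hf0 hfM hβ α h0.le
      have h2 : r * (α ^ q * r) ^ β ≤ a * (α ^ q * a) ^ β := by gcongr
      linarith
  have hlt : ∀ r, δ r < u r := by
    by_contra! hcon
    obtain ⟨r₀, hr₀⟩ := hcon
    set S := {r : ℝ | u r ≤ δ r} with hS
    have hSc : IsClosed S := isClosed_le huc hδc
    have hSa : ∀ r ∈ S, a < r := fun r hr => by
      by_contra! hra
      have h1 := hsmall r hra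
      have h2 : u r ≤ δ r := hr
      linarith [hδ4 r]
    have hbdd : BddBelow S := ⟨a, fun r hr => (hSa r hr).le⟩
    have hR : sInf S ∈ S := hSc.csInf_mem ⟨r₀, hr₀⟩ hbdd
    set R := sInf S with hRdef
    have heq : ∀ r, 0 < r → r < R → u r = h r := fun r _ hrR => by
      have h1 : r ∉ S := fun hmem => absurd (csInf_le hbdd hmem) (not_le.2 hrR)
      have h2 : δ r < u r := not_le.1 h1
      rw [hfix r, max_eq_right h2.le]
    have haR := hSa R hR
    have h1 := hw.profile_mul_rpow_weightedInt_le hβ hq hder hK hh hh0 (fun t => (hb t).2) heq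
      ha0 haR.le
    have h2 : u R ≤ δ R := hR
    have h3 := hsmall a le_rfl
    have h4 := hpos R
    have h5 : δ R * V R ^ C = α / 4 * V a ^ C := by
      rw [max_eq_left haR.le] at h4
      simp only [hδ, max_eq_left haR.le]
      field_simp
    rw [max_eq_left haR.le] at h4
    have h6 : α / 2 * V a ^ C ≤ α / 4 * V a ^ C := by
      calc α / 2 * V a ^ C ≤ u a * V a ^ C := mul_le_mul_of_nonneg_right h3 hVa.le
        _ ≤ u R * V R ^ C := h1
        _ ≤ δ R * V R ^ C := mul_le_mul_of_nonneg_right h2 h4.le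
        _ = _ := h5
    nlinarith
  have huh : u = h := by
    funext r
    rw [hfix r, max_eq_right (hlt r).le]
  exact ⟨h, hh, fun t => ⟨hh0 t, (hb t).2⟩, huh⟩

end Existence

section Model

variable {ψ : ℝ → ℝ}

theorem IsCHModel.differentiable (hψ : IsCHModel ψ) : Differentiable ℝ ψ :=
  hψ.1.differentiable (by simp)

theorem IsCHModel.differentiable_deriv (hψ : IsCHModel ψ) : Differentiable ℝ (deriv ψ) :=
  ((contDiff_infty_iff_deriv.1 hψ.1).2).differentiable (by simp)

theorem IsCHModel.one_le_deriv (hψ : IsCHModel ψ) {r : ℝ} (hr : 0 ≤ r) : 1 ≤ deriv ψ r := by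
  have hm : MonotoneOn (deriv ψ) (Set.Ici 0) :=
    monotoneOn_of_deriv_nonneg (convex_Ici 0) hψ.differentiable_deriv.continuous.continuousOn
      hψ.differentiable_deriv.differentiableOn fun x hx => hψ.2.2.2.1 x (by
        rw [interior_Ici] at hx
        exact le_of_lt hx)
  rw [← hψ.2.2.1]
  exact hm Set.self_mem_Ici hr hr

theorem IsCHModel.monotoneOn (hψ : IsCHModel ψ) : MonotoneOn ψ (Set.Ici 0) :=
  monotoneOn_of_deriv_nonneg (convex_Ici 0) hψ.differentiable.continuous.continuousOn
    hψ.differentiable.differentiableOn fun x hx => by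
      rw [interior_Ici] at hx
      linarith [hψ.one_le_deriv (le_of_lt hx)]

theorem IsCHModel.nonneg (hψ : IsCHModel ψ) {r : ℝ} (hr : 0 ≤ r) : 0 ≤ ψ r := by
  simpa [hψ.2.1] using hψ.monotoneOn Set.self_mem_Ici hr hr

/-- The surface density of geodesic spheres is a radial weight. -/
theorem IsCHModel.isRadialWeight (hψ : IsCHModel ψ) {m : ℕ} (hm : m ≠ 0) :
    IsRadialWeight fun r => ψ (max r 0) ^ m where
  continuous := (hψ.differentiable.continuous.comp (continuous_id.max continuous_const)).pow m
  monotone := fun r s hrs => pow_le_pow_left₀ (hψ.nonneg (le_max_right r 0))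
    (hψ.monotoneOn (le_max_right r 0) (le_max_right s 0) (max_le_max hrs le_rfl)) m
  zero := fun r hr => by rw [max_eq_right hr, hψ.2.1, zero_pow hm]
  pos := fun r hr => by
    rw [max_eq_left hr.le]
    exact pow_pos (hψ.2.2.2.2 r hr) m

theorem IsCHModel.hasDerivAt_weight (hψ : IsCHModel ψ) (m : ℕ) {r : ℝ} (hr : 0 < r) :
    HasDerivAt (fun r => ψ (max r 0) ^ m) (m * ψ r ^ (m - 1) * deriv ψ r) r := by
  refine ((hψ.differentiable r).hasDerivAt.pow m).congr_of_eventuallyEq ?_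
  filter_upwards [lt_mem_nhds hr] with s hs
  simp [max_eq_left (le_of_lt hs)]

/-- Convexity of `ψ` gives `ψ ^ (m + 1) ≤ (m + 1) ψ' ∫ ψ ^ m`. -/
theorem IsCHModel.pow_succ_le (hψ : IsCHModel ψ) {m : ℕ} (hm : m ≠ 0) {r : ℝ} (hr : 0 ≤ r) :
    ψ r ^ (m + 1) ≤
      (m + 1) * deriv ψ r * weightedInt (fun r => ψ (max r 0) ^ m) (fun _ => 1) r := by
  have hw := hψ.isRadialWeight hm
  set w : ℝ → ℝ := fun r => ψ (max r 0) ^ m with hwdef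
  set V := weightedInt w (fun _ => 1) with hV
  have hVd : ∀ r, HasDerivAt V (w r) r := fun r => by
    simpa using hw.hasDerivAt_weightedInt (continuous_const (y := (1:ℝ))) r
  have hd : ∀ s, HasDerivAt (fun s => (m + 1) * deriv ψ s * V s - ψ s ^ (m + 1))
      ((m + 1) * deriv (deriv ψ) s * V s + (m + 1) * deriv ψ s * w s
        - ((m + 1 : ℕ) : ℝ) * ψ s ^ m * deriv ψ s) s := fun s =>
    ((((hψ.differentiable_deriv s).hasDerivAt.const_mul ((m : ℝ) + 1)).mul (hVd s))).sub
      ((hψ.differentiable s).hasDerivAt.pow (m + 1))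
  have hmono : MonotoneOn (fun s => (m + 1) * deriv ψ s * V s - ψ s ^ (m + 1)) (Set.Ici 0) := by
    refine monotoneOn_of_hasDerivWithinAt_nonneg (convex_Ici 0)
      (fun s _ => (hd s).continuousAt.continuousWithinAt)
      (fun s _ => (hd s).hasDerivWithinAt) fun s hs => ?_
    rw [interior_Ici] at hs
    have hs0 : 0 < s := hs
    have h1 : 0 ≤ ((m : ℝ) + 1) * deriv (deriv ψ) s * V s :=
      mul_nonneg (mul_nonneg (by positivity) (hψ.2.2.2.1 s hs0.le))
        (hw.weightedInt_pos continuous_const (fun _ => one_pos) hs0).le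
    simp only [hwdef, max_eq_left hs0.le]
    push_cast
    linarith
  have h2 := hmono Set.self_mem_Ici hr hr
  have hV0 : V 0 = 0 := hw.weightedInt_of_nonpos _ le_rfl
  simp only [hV0, hψ.2.1] at h2
  simp at h2
  exact h2

theorem IsCHModel.pohozaev_condition (hψ : IsCHModel ψ) {m : ℕ} (hm : m ≠ 0) {κ : ℝ}
    (hκ : κ ≤ m / (m + 1)) {r : ℝ} (hr : 0 < r) :
    κ * (ψ (max r 0) ^ m) ^ 2 ≤ m * ψ r ^ (m - 1) * deriv ψ r *
      weightedInt (fun r => ψ (max r 0) ^ m) (fun _ => 1) r := by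
  have h1 := hψ.pow_succ_le hm hr.le
  have hψr := hψ.2.2.2.2 r hr
  rw [max_eq_left hr.le]
  have h2 : (ψ r ^ m) ^ 2 = ψ r ^ (m - 1) * ψ r ^ (m + 1) := by
    rw [← pow_mul, ← pow_add]
    congr 1
    omega
  calc κ * (ψ r ^ m) ^ 2 ≤ m / (m + 1) * (ψ r ^ m) ^ 2 :=
        mul_le_mul_of_nonneg_right hκ (by positivity)
    _ = m / (m + 1) * ψ r ^ (m - 1) * ψ r ^ (m + 1) := by rw [h2, mul_assoc]
    _ ≤ m / (m + 1) * ψ r ^ (m - 1) * ((m + 1) * deriv ψ r *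
        weightedInt (fun r => ψ (max r 0) ^ m) (fun _ => 1) r) :=
        mul_le_mul_of_nonneg_left h1 (by positivity)
    _ = _ := by field_simp

theorem IsRadialSolution.deriv_neg {n : ℕ} {p q α : ℝ} {u : ℝ → ℝ} (hp : 1 < p)
    (hψ : IsCHModel ψ) (hu : IsRadialSolution n p q ψ ⊤ α u) {r : ℝ} (hr : 0 < r) :
    deriv u r < 0 := by
  have htop : ∀ s : ℝ, ENNReal.ofReal s < ⊤ := fun s => ENNReal.ofReal_lt_top
  have hdc : ContinuousOn (deriv u) (Set.Ici 0) :=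
    hu.deriv_cont.mono fun s hs => ⟨hs, htop s⟩
  set φ : ℝ → ℝ := fun s => ψ s ^ (n - 1) * |deriv u s| ^ (p - 2) * deriv u s with hφ
  have hφ0 : φ 0 = 0 := by simp [hφ, hu.deriv_init]
  have hφabs : ∀ s, |φ s| = |ψ s ^ (n - 1)| * |deriv u s| ^ (p - 1) := fun s => by
    rcases eq_or_ne (deriv u s) 0 with h0 | h0
    · simp [hφ, h0, (by linarith : p - 1 ≠ 0)]
    · have : |deriv u s| ^ (p - 1) = |deriv u s| ^ (p - 2) * |deriv u s| := by
        rw [← rpow_add_one (abs_pos.2 h0).ne']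
        ring_nf
      simp only [hφ]
      rw [abs_mul, abs_mul, abs_of_nonneg (rpow_nonneg (abs_nonneg _) _), this, mul_assoc]
  have hφc : ContinuousOn φ (Set.Ici 0) := by
    intro s hs
    rcases eq_or_lt_of_le (show 0 ≤ s from hs) with h0 | h0
    · rw [← h0, ContinuousWithinAt, hφ0, tendsto_zero_iff_abs_tendsto_zero]
      have h1 : ContinuousWithinAt (fun s => |ψ s ^ (n - 1)| * |deriv u s| ^ (p - 1))
          (Set.Ici 0) 0 :=
        (hψ.differentiable.continuous.pow (n - 1)).abs.continuousWithinAt.mul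
          ((hdc 0 Set.self_mem_Ici).abs.rpow_const (Or.inr (by linarith)))
      have h2 : Tendsto _ _ _ := h1
      beta_reduce at h2
      rw [hu.deriv_init, abs_zero, zero_rpow (by linarith), mul_zero] at h2
      exact h2.congr fun s => (hφabs s).symm
    · exact (hu.eqn s h0 (htop s)).continuousAt.continuousWithinAt
  have hanti : StrictAntiOn φ (Set.Ici 0) := by
    refine strictAntiOn_of_deriv_neg (convex_Ici 0) hφc fun s hs => ?_
    rw [interior_Ici] at hs
    have hs0 : 0 < s := hs
    rw [(hu.eqn s hs0 (htop s)).deriv, neg_lt_zero]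
    exact mul_pos (pow_pos (hψ.2.2.2.2 s hs0) _) (rpow_pos_of_pos (hu.pos s hs0.le (htop s)) q)
  have h1 : φ r < 0 := by
    rw [← hφ0]
    exact hanti Set.self_mem_Ici hr.le hr
  by_contra! h2
  have : 0 ≤ φ r := mul_nonneg (mul_nonneg (pow_nonneg (hψ.2.2.2.2 r hr).le _)
    (rpow_nonneg (abs_nonneg _) _)) h2
  linarith

/-- A positive fixed profile for the weight `ψ ^ (n - 1)` solves the radial equation. -/
theorem IsCHModel.isRadialSolution_of_profile (hψ : IsCHModel ψ) {n : ℕ} (hn : 2 ≤ n)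
    {p q α : ℝ} (hp : 1 < p) (hq : 0 < q) {u : ℝ → ℝ} (huc : Continuous u)
    (hu0 : ∀ t, 0 < u t ∧ u t ≤ α)
    (hu : radialProfile (fun r => ψ (max r 0) ^ (n - 1)) (1 / (p - 1)) α
      (fun s => u s ^ q) = u) : IsRadialSolution n p q ψ ⊤ α u := by
  have hw := hψ.isRadialWeight (m := n - 1) (by omega)
  set w : ℝ → ℝ := fun r => ψ (max r 0) ^ (n - 1) with hwdef
  set f : ℝ → ℝ := fun s => u s ^ q with hf
  have hβ : 0 < 1 / (p - 1) := one_div_pos.2 (by linarith)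
  have hfc : Continuous f := huc.rpow_const fun _ => Or.inr hq.le
  have hf0 : ∀ t, 0 < f t := fun t => rpow_pos_of_pos (hu0 t).1 q
  have hfM : ∀ t, f t ≤ α ^ q := fun t => rpow_le_rpow (hu0 t).1.le (hu0 t).2 hq.le
  have hud : ∀ r, HasDerivAt u (-(radialFlux w f r ^ (1 / (p - 1)))) r := fun r => by
    conv => arg 1; rw [← hu]
    exact hw.hasDerivAt_radialProfile hfc (fun t => (hf0 t).le) hfM hβ α r
  have hud' : deriv u = fun r => -(radialFlux w f r ^ (1 / (p - 1))) :=
    funext fun r => (hud r).deriv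
  refine ⟨?_, ?_, fun r _ _ => (hu0 r).1, fun r _ _ => (hud r).differentiableAt, ?_, ?_⟩
  · rw [← hu, hw.radialProfile_of_nonpos f hβ α le_rfl]
  · rw [hud']
    simp only [hw.radialFlux_of_nonpos f le_rfl, zero_rpow hβ.ne', neg_zero]
  · rw [hud']
    exact ((hw.continuous_radialFlux hfc (fun t => (hf0 t).le) hfM).rpow_const
      fun _ => Or.inr hβ.le).neg.continuousOn
  · intro r hr _
    have h1 := (hw.hasDerivAt_weightedInt hfc r).neg
    have h2 : w r = ψ r ^ (n - 1) := by simp only [hwdef, max_eq_left hr.le]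
    rw [h2] at h1
    refine h1.congr_of_eventuallyEq ?_
    filter_upwards [lt_mem_nhds hr] with s hs
    have hs0 : 0 < s := hs
    have hws : w s = ψ s ^ (n - 1) := by simp only [hwdef, max_eq_left hs0.le]
    have hZ : 0 < radialFlux w f s := div_pos (hw.weightedInt_pos hfc hf0 hs0) (hw.pos s hs0)
    have hZp := rpow_pos_of_pos hZ (1 / (p - 1))
    have hp1 : p - 1 ≠ 0 := by linarith
    have h3 : (radialFlux w f s ^ (1 / (p - 1))) ^ (p - 2) * radialFlux w f s ^ (1 / (p - 1)) =
        radialFlux w f s := by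
      rw [← rpow_add_one hZp.ne', ← rpow_mul hZ.le]
      have : 1 / (p - 1) * (p - 2 + 1) = 1 := by field_simp; ring
      rw [this, rpow_one]
    have hψs := hψ.2.2.2.2 s hs0
    simp only [hud', abs_neg, abs_of_pos hZp, Pi.neg_apply]
    rw [mul_assoc, mul_neg, h3, mul_neg, radialFlux, hws]
    field_simp

end Model

/-- global existence of radial solutions; positivity and strict
monotonicity of every global radial solution. -/
theorem statement_3 (n : ℕ) (hn : 2 ≤ n) (p q : ℝ) (hp1 : 1 < p) (hpn : p < n)
    (hq : (n : ℝ) * p / ((n : ℝ) - p) - 1 ≤ q)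
    (ψ : ℝ → ℝ) (hψ : IsCHModel ψ) :
    (∀ α : ℝ, 0 < α → ∃ u : ℝ → ℝ, IsRadialSolution n p q ψ ⊤ α u) ∧
      ∀ α : ℝ, 0 < α → ∀ u : ℝ → ℝ, IsRadialSolution n p q ψ ⊤ α u →
        (∀ r : ℝ, 0 ≤ r → 0 < u r) ∧ ∀ r : ℝ, 0 < r → deriv u r < 0 := by

  have hnp : 0 < (n : ℝ) - p := by linarith
  have hn0 : (0 : ℝ) < n := by linarith
  have hp0 : 0 < p := by linarith
  have hq1 : (n : ℝ) * p / (n - p) ≤ q + 1 := by linarith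
  have hq0 : 0 < q := by
    have : p ≤ (n : ℝ) * p / (n - p) := by
      rw [le_div_iff₀ hnp]
      nlinarith
    linarith
  refine ⟨fun α hα => ?_, fun α _ u hu => ⟨fun r hr => hu.pos r hr ENNReal.ofReal_lt_top,
    fun r hr => hu.deriv_neg hp1 hψ hr⟩⟩
  have hβ : 0 < 1 / (p - 1) := one_div_pos.2 (by linarith)
  have hm : n - 1 ≠ 0 := by omega
  have hκ : 1 / (1 + 1 / (p - 1)) + 1 / (q + 1) ≤ ((n - 1 : ℕ) : ℝ) / ((n - 1 : ℕ) + 1) := by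
    have h1 : 1 / (q + 1) ≤ 1 / p - 1 / n := by
      have : 1 / (q + 1) ≤ 1 / ((n : ℝ) * p / (n - p)) :=
        one_div_le_one_div_of_le (by positivity) hq1
      refine this.trans (le_of_eq ?_)
      field_simp
    have h2 : 1 / (1 + 1 / (p - 1)) = 1 - 1 / p := by
      have : p - 1 ≠ 0 := by linarith
      have h4 : 1 + 1 / (p - 1) = p / (p - 1) := by
        field_simp
        ring
      rw [h4, one_div_div, sub_div, div_self hp0.ne']
    have h3 : ((n - 1 : ℕ) : ℝ) / ((n - 1 : ℕ) + 1) = 1 - 1 / n := by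
      rw [Nat.cast_sub (by omega)]
      rw [Nat.cast_one, sub_add_cancel, sub_div, div_self hn0.ne']
    linarith
  obtain ⟨u, h1, h2, h3⟩ := (hψ.isRadialWeight hm).exists_positive_profile hβ hq0 hα
    (fun r hr => hψ.hasDerivAt_weight (n - 1) hr)
    (fun r hr => hψ.pohozaev_condition hm hκ hr)
  exact ⟨u, hψ.isRadialSolution_of_profile hn hp1 hq0 h1 h2 h3⟩
end

section
/- Let ψ be a Cartan–Hadamard model function such that ∫₀^∞ Θ(s)^{1/(p−1)} ds < +∞. Then every global radial solution u satisfies ∫₀^∞ |u′(r)|^p ψ(r)^{n−1} dr = +∞ (the solution has infinite energy). -/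
open Real Filter MeasureTheory
open scoped ENNReal Topology

lemma monotoneOn_Ici_of_hasDerivAt_nonneg {a : ℝ} {f f' : ℝ → ℝ}
    (hc : ContinuousOn f (Set.Ici a)) (hd : ∀ x, a < x → HasDerivAt f (f' x) x)
    (h : ∀ x, a < x → 0 ≤ f' x) : MonotoneOn f (Set.Ici a) := by
  refine monotoneOn_of_deriv_nonneg (convex_Ici a) hc ?_ ?_ <;> rw [interior_Ici]
  · exact fun x hx => (hd x hx).differentiableAt.differentiableWithinAt
  · intro x hx
    rw [(hd x hx).deriv]
    exact h x hx

lemma strictMonoOn_Ici_of_hasDerivAt_pos {a : ℝ} {f f' : ℝ → ℝ}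
    (hc : ContinuousOn f (Set.Ici a)) (hd : ∀ x, a < x → HasDerivAt f (f' x) x)
    (h : ∀ x, a < x → 0 < f' x) : StrictMonoOn f (Set.Ici a) := by
  refine strictMonoOn_of_deriv_pos (convex_Ici a) hc ?_
  rw [interior_Ici]
  intro x hx
  rw [(hd x hx).deriv]
  exact h x hx

namespace IsCHModel

variable {ψ : ℝ → ℝ}

lemma continuous (hψ : IsCHModel ψ) : Continuous ψ := hψ.1.continuous

lemma hasDerivAt (hψ : IsCHModel ψ) (r : ℝ) : HasDerivAt ψ (deriv ψ r) r :=
  (hψ.1.differentiable (by simp) r).hasDerivAt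

lemma hasDerivAt_deriv (hψ : IsCHModel ψ) (r : ℝ) :
    HasDerivAt (deriv ψ) (deriv (deriv ψ) r) r := by
  have h : ContDiff ℝ (⊤ : ℕ∞) (deriv ψ) := (contDiff_infty_iff_deriv.1 hψ.1).2
  exact (h.differentiable (by simp) r).hasDerivAt

lemma continuous_deriv (hψ : IsCHModel ψ) : Continuous (deriv ψ) :=
  continuous_iff_continuousAt.2 fun r => (hψ.hasDerivAt_deriv r).continuousAt

lemma pos (hψ : IsCHModel ψ) {r : ℝ} (hr : 0 < r) : 0 < ψ r := hψ.2.2.2.2 r hr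

lemma one_le_deriv_s11 (hψ : IsCHModel ψ) {r : ℝ} (hr : 0 ≤ r) : 1 ≤ deriv ψ r := by
  have h := monotoneOn_Ici_of_hasDerivAt_nonneg hψ.continuous_deriv.continuousOn
    (fun x _ => hψ.hasDerivAt_deriv x) (fun x hx => hψ.2.2.2.1 x hx.le)
    (Set.self_mem_Ici (a := (0 : ℝ))) hr hr
  rwa [hψ.2.2.1] at h

lemma monotoneOn_s11 (hψ : IsCHModel ψ) : MonotoneOn ψ (Set.Ici 0) :=
  monotoneOn_Ici_of_hasDerivAt_nonneg hψ.continuous.continuousOn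
    (fun x _ => hψ.hasDerivAt x) fun _ hx => zero_le_one.trans (hψ.one_le_deriv_s11 hx.le)

end IsCHModel

/-- The volume `∫₀ʳ ψ(s)^m ds`. -/
noncomputable def modelVol (m : ℕ) (ψ : ℝ → ℝ) (r : ℝ) : ℝ := ∫ s in (0:ℝ)..r, ψ s ^ m

section Volume

variable {ψ : ℝ → ℝ} {m : ℕ}

lemma modelVol_zero : modelVol m ψ 0 = 0 := by simp [modelVol]

lemma hasDerivAt_modelVol (hψ : IsCHModel ψ) (r : ℝ) :
    HasDerivAt (modelVol m ψ) (ψ r ^ m) r :=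
  ((hψ.continuous.pow m).integral_hasStrictDerivAt 0 r).hasDerivAt

lemma continuous_modelVol (hψ : IsCHModel ψ) : Continuous (modelVol m ψ) :=
  continuous_iff_continuousAt.2 fun r => (hasDerivAt_modelVol hψ r).continuousAt

lemma modelVol_pos (hψ : IsCHModel ψ) {r : ℝ} (hr : 0 < r) : 0 < modelVol m ψ r := by
  have h := strictMonoOn_Ici_of_hasDerivAt_pos (continuous_modelVol (m := m) hψ).continuousOn
    (fun x _ => hasDerivAt_modelVol hψ x) (fun x hx => pow_pos (hψ.pos hx) m)
    (Set.self_mem_Ici (a := (0 : ℝ))) hr.le hr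
  rwa [modelVol_zero] at h

/-- The defect `n ψ' ∫₀ʳ ψ^{n-1} - ψⁿ` (with `n = m + 1`), which vanishes exactly on the
Euclidean part of the model. -/
noncomputable def volDefect (m : ℕ) (ψ : ℝ → ℝ) (r : ℝ) : ℝ :=
  (m + 1) * modelVol m ψ r * deriv ψ r - ψ r ^ (m + 1)

lemma volDefect_zero (hψ : IsCHModel ψ) : volDefect m ψ 0 = 0 := by
  simp [volDefect, modelVol_zero, hψ.2.1]

lemma hasDerivAt_volDefect (hψ : IsCHModel ψ) (r : ℝ) :
    HasDerivAt (volDefect m ψ) ((m + 1) * modelVol m ψ r * deriv (deriv ψ) r) r := by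
  have h := (((hasDerivAt_modelVol (m := m) hψ r).const_mul ((m : ℝ) + 1)).mul
    (hψ.hasDerivAt_deriv r)).sub ((hψ.hasDerivAt r).pow (m + 1))
  refine h.congr_deriv ?_
  push_cast
  ring

lemma monotoneOn_volDefect (hψ : IsCHModel ψ) : MonotoneOn (volDefect m ψ) (Set.Ici 0) :=
  monotoneOn_Ici_of_hasDerivAt_nonneg
    (fun r _ => (hasDerivAt_volDefect hψ r).continuousAt.continuousWithinAt)
    (fun x _ => hasDerivAt_volDefect hψ x) fun x hx =>
      mul_nonneg (mul_nonneg (by positivity) (modelVol_pos hψ hx).le) (hψ.2.2.2.1 x hx.le)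

lemma volDefect_nonneg (hψ : IsCHModel ψ) {r : ℝ} (hr : 0 ≤ r) : 0 ≤ volDefect m ψ r := by
  have h := monotoneOn_volDefect (m := m) hψ Set.self_mem_Ici hr hr
  rwa [volDefect_zero hψ] at h

/-- A model with vanishing defect is Euclidean, so its `Θ` is bounded below at infinity. -/
lemma exists_volDefect_pos (hψ : IsCHModel ψ) {e : ℝ} (he : 0 ≤ e)
    (hint : IntegrableOn (fun s => (modelVol m ψ s / ψ s ^ m) ^ e) (Set.Ioi 0)) :
    ∃ r, 0 < r ∧ 0 < volDefect m ψ r := by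
  by_contra! hcon
  have hD : ∀ r, 0 < r → volDefect m ψ r = 0 := fun r hr =>
    le_antisymm (hcon r hr) (volDefect_nonneg hψ hr.le)
  have hdd : ∀ r, 0 < r → deriv (deriv ψ) r = 0 := by
    intro r hr
    have h0 : HasDerivAt (volDefect m ψ) 0 r := by
      refine (hasDerivAt_const r (0 : ℝ)).congr_of_eventuallyEq ?_
      filter_upwards [lt_mem_nhds hr] with s hs using hD s hs
    have h := (hasDerivAt_volDefect hψ r).unique h0
    have hV := modelVol_pos (m := m) hψ hr
    rcases mul_eq_zero.1 h with h | h
    · exact absurd h (by positivity)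
    · exact h
  have hd : ∀ r, 0 ≤ r → deriv ψ r ≤ 1 := by
    intro r hr
    have h := monotoneOn_Ici_of_hasDerivAt_nonneg hψ.continuous_deriv.neg.continuousOn
      (fun x _ => (hψ.hasDerivAt_deriv x).neg)
      (fun x hx => by simp [hdd x hx])
      (Set.self_mem_Ici (a := (0 : ℝ))) hr hr
    simp only [Pi.neg_apply, hψ.2.2.1] at h
    linarith
  have hle : ∀ s ∈ Set.Ioi (1 : ℝ), (ψ 1 / (m + 1)) ^ e ≤ (modelVol m ψ s / ψ s ^ m) ^ e := by
    intro s hs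
    have hs1 : (1 : ℝ) < s := hs
    have hs0 : 0 < s := zero_lt_one.trans hs1
    have hp := hψ.pos hs0
    have h1 := hψ.pos one_pos
    refine Real.rpow_le_rpow (by positivity) ?_ he
    have h := hD s hs0
    rw [volDefect, le_antisymm (hd s hs0.le) (hψ.one_le_deriv_s11 hs0.le)] at h
    have hm : ψ 1 ≤ ψ s := hψ.monotoneOn_s11 (Set.mem_Ici.2 zero_le_one) hs0.le hs1.le
    rw [div_le_div_iff₀ (by positivity) (by positivity)]
    calc ψ 1 * ψ s ^ m ≤ ψ s * ψ s ^ m := by gcongr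
      _ = modelVol m ψ s * (m + 1) := by rw [pow_succ] at h; linarith
  have hc : 0 < (ψ 1 / (m + 1)) ^ e :=
    Real.rpow_pos_of_pos (div_pos (hψ.pos one_pos) (by positivity)) e
  have hconst : IntegrableOn (fun _ : ℝ => (ψ 1 / ((m : ℝ) + 1)) ^ e) (Set.Ioi 1) := by
    refine Integrable.mono' (hint.mono_set (Set.Ioi_subset_Ioi zero_le_one))
      aestronglyMeasurable_const ?_
    filter_upwards [ae_restrict_mem measurableSet_Ioi] with s hs
    rw [Real.norm_of_nonneg hc.le]
    exact hle s hs
  rw [integrableOn_const_iff] at hconst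
  simp [hc.ne'] at hconst

end Volume

namespace IsRadialSolution

variable {n : ℕ} {p q α : ℝ} {ψ u : ℝ → ℝ}

/-- The flux `-ψ^{n-1} |u'|^{p-2} u'`. -/
noncomputable def flux (n : ℕ) (p : ℝ) (ψ u : ℝ → ℝ) (r : ℝ) : ℝ :=
  -(ψ r ^ (n - 1) * |deriv u r| ^ (p - 2) * deriv u r)

lemma u_pos (hu : IsRadialSolution n p q ψ ⊤ α u) {r : ℝ} (hr : 0 ≤ r) : 0 < u r :=
  hu.pos r hr ENNReal.ofReal_lt_top

lemma hasDerivAt (hu : IsRadialSolution n p q ψ ⊤ α u) {r : ℝ} (hr : 0 ≤ r) :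
    HasDerivAt u (deriv u r) r :=
  (hu.diff r hr ENNReal.ofReal_lt_top).hasDerivAt

lemma continuousOn (hu : IsRadialSolution n p q ψ ⊤ α u) : ContinuousOn u (Set.Ici 0) :=
  fun _ hr => (hu.hasDerivAt hr).continuousAt.continuousWithinAt

lemma continuousOn_deriv (hu : IsRadialSolution n p q ψ ⊤ α u) :
    ContinuousOn (deriv u) (Set.Ici 0) :=
  hu.deriv_cont.mono fun _ hr => ⟨hr, ENNReal.ofReal_lt_top⟩

lemma flux_zero (hu : IsRadialSolution n p q ψ ⊤ α u) : flux n p ψ u 0 = 0 := by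
  simp [flux, hu.deriv_init]

lemma hasDerivAt_flux (hu : IsRadialSolution n p q ψ ⊤ α u) {r : ℝ} (hr : 0 < r) :
    HasDerivAt (flux n p ψ u) (ψ r ^ (n - 1) * u r ^ q) r := by
  simpa using! (hu.eqn r hr ENNReal.ofReal_lt_top).neg

lemma abs_rpow_sub_two_mul_abs (hp : 1 < p) (x : ℝ) : |x| ^ (p - 2) * |x| = |x| ^ (p - 1) := by
  rcases eq_or_ne x 0 with rfl | hx
  · simp [Real.zero_rpow (sub_pos.2 hp).ne']
  · rw [← Real.rpow_add_one (abs_ne_zero.2 hx)]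
    congr 1
    ring

lemma continuousOn_flux (hp : 1 < p) (hψ : IsCHModel ψ)
    (hu : IsRadialSolution n p q ψ ⊤ α u) :
    ContinuousOn (flux n p ψ u) (Set.Ici 0) := by
  intro r hr
  rcases (Set.mem_Ici.1 hr).eq_or_lt with rfl | hr
  · have hcont : ContinuousOn (fun s => |ψ s ^ (n - 1)| * |deriv u s| ^ (p - 1)) (Set.Ici 0) :=
      (hψ.continuous.pow (n - 1)).abs.continuousOn.mul
        (hu.continuousOn_deriv.abs.rpow_const fun _ _ => Or.inr (sub_pos.2 hp).le)
    have h0 := hcont 0 Set.self_mem_Ici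
    rw [ContinuousWithinAt, hu.deriv_init, abs_zero, Real.zero_rpow (sub_pos.2 hp).ne',
      mul_zero] at h0
    rw [ContinuousWithinAt, hu.flux_zero]
    refine squeeze_zero_norm (fun s => le_of_eq ?_) h0
    rw [flux, norm_neg, Real.norm_eq_abs, abs_mul, abs_mul, mul_assoc,
      abs_of_nonneg (Real.rpow_nonneg (abs_nonneg (deriv u s)) (p - 2)),
      abs_rpow_sub_two_mul_abs hp]
  · exact (hu.hasDerivAt_flux hr).continuousAt.continuousWithinAt

lemma flux_pos (hp : 1 < p) (hψ : IsCHModel ψ) (hu : IsRadialSolution n p q ψ ⊤ α u) {r : ℝ}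
    (hr : 0 < r) : 0 < flux n p ψ u r := by
  have h := strictMonoOn_Ici_of_hasDerivAt_pos (hu.continuousOn_flux hp hψ)
    (fun x hx => hu.hasDerivAt_flux hx)
    (fun x hx => mul_pos (pow_pos (hψ.pos hx) _) (Real.rpow_pos_of_pos (hu.u_pos hx.le) q))
    Set.self_mem_Ici hr.le hr
  rwa [hu.flux_zero] at h

lemma deriv_neg_s11 (hp : 1 < p) (hψ : IsCHModel ψ) (hu : IsRadialSolution n p q ψ ⊤ α u) {r : ℝ}
    (hr : 0 < r) : deriv u r < 0 := by
  by_contra! h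
  have hf := hu.flux_pos hp hψ hr
  have : 0 ≤ ψ r ^ (n - 1) * |deriv u r| ^ (p - 2) * deriv u r :=
    mul_nonneg (mul_nonneg (pow_pos (hψ.pos hr) _).le (by positivity)) h
  rw [flux] at hf
  linarith

lemma deriv_eq_neg_abs (hp : 1 < p) (hψ : IsCHModel ψ)
    (hu : IsRadialSolution n p q ψ ⊤ α u) {r : ℝ} (hr : 0 < r) :
    deriv u r = -|deriv u r| := by
  rw [abs_of_neg (hu.deriv_neg_s11 hp hψ hr), neg_neg]

lemma abs_deriv_pos (hp : 1 < p) (hψ : IsCHModel ψ)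
    (hu : IsRadialSolution n p q ψ ⊤ α u) {r : ℝ} (hr : 0 < r) : 0 < |deriv u r| :=
  abs_pos.2 (hu.deriv_neg_s11 hp hψ hr).ne

lemma flux_eq (hp : 1 < p) (hψ : IsCHModel ψ)
    (hu : IsRadialSolution n p q ψ ⊤ α u) {r : ℝ} (hr : 0 < r) :
    flux n p ψ u r = ψ r ^ (n - 1) * |deriv u r| ^ (p - 1) := by
  rw [← abs_rpow_sub_two_mul_abs hp, flux]
  nth_rw 2 [hu.deriv_eq_neg_abs hp hψ hr]
  ring

lemma energy_density_eq (hp : 1 < p) (hψ : IsCHModel ψ)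
    (hu : IsRadialSolution n p q ψ ⊤ α u) {r : ℝ} (hr : 0 < r) :
    |deriv u r| ^ p * ψ r ^ (n - 1) = flux n p ψ u r * |deriv u r| := by
  rw [hu.flux_eq hp hψ hr, mul_assoc, ← Real.rpow_add_one (hu.abs_deriv_pos hp hψ hr).ne',
    sub_add_cancel, mul_comm]

lemma antitoneOn (hp : 1 < p) (hψ : IsCHModel ψ)
    (hu : IsRadialSolution n p q ψ ⊤ α u) : AntitoneOn u (Set.Ici 0) := by
  have h := monotoneOn_Ici_of_hasDerivAt_nonneg hu.continuousOn.neg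
    (fun x hx => (hu.hasDerivAt hx.le).neg)
    (fun x hx => by have := hu.deriv_neg_s11 hp hψ hx; linarith)
  intro x hx y hy hxy
  simpa using h hx hy hxy

lemma hasDerivAt_abs_deriv_rpow (hp : 1 < p) (hψ : IsCHModel ψ)
    (hu : IsRadialSolution n p q ψ ⊤ α u) {r : ℝ} (hr : 0 < r) :
    HasDerivAt (fun s => |deriv u s| ^ p)
      (p / (p - 1) * (|deriv u r| * u r ^ q -
        ((n - 1 : ℕ) : ℝ) * (deriv ψ r / ψ r) * |deriv u r| ^ p)) r := by
  have hp0 : p - 1 ≠ 0 := (sub_pos.2 hp).ne'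
  have hψr := hψ.pos hr
  have hY := hu.abs_deriv_pos hp hψ hr
  have hquot : ∀ s, 0 < s → flux n p ψ u s / ψ s ^ (n - 1) = |deriv u s| ^ (p - 1) := by
    intro s hs
    have := hψ.pos hs
    rw [hu.flux_eq hp hψ hs]
    field_simp
  have hZ := ((hu.hasDerivAt_flux hr).div ((hψ.hasDerivAt r).pow (n - 1))
    (pow_pos hψr _).ne')
  have hpow := hZ.rpow_const (p := p / (p - 1)) (Or.inl (by
    simp only [Pi.div_apply, Pi.pow_apply]
    rw [hquot r hr]; positivity))
  refine (hpow.congr_of_eventuallyEq ?_).congr_deriv ?_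
  · filter_upwards [lt_mem_nhds hr] with s hs
    simp only [Pi.div_apply, Pi.pow_apply]
    rw [hquot s hs, ← Real.rpow_mul (abs_nonneg _), mul_div_cancel₀ _ hp0]
  · simp only [Pi.div_apply, Pi.pow_apply]
    rw [hquot r hr, ← Real.rpow_mul (abs_nonneg _), hu.flux_eq hp hψ hr,
      show (p - 1) * (p / (p - 1) - 1) = 1 by field_simp; ring, Real.rpow_one]
    have h1 : |deriv u r| ^ p = |deriv u r| ^ (p - 1) * |deriv u r| := by
      rw [← Real.rpow_add_one hY.ne', sub_add_cancel]
    rw [h1]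
    rcases Nat.eq_zero_or_pos (n - 1) with hm | hm
    · simp [hm]; ring
    · obtain ⟨k, hk⟩ := Nat.exists_eq_add_of_le' hm
      rw [hk]
      simp only [Nat.succ_eq_add_one, zero_add, Nat.add_sub_cancel, pow_succ]
      field_simp

lemma hasDerivAt_pohozaevP (hn : 1 ≤ n) (hp : 1 < p) (hq : 0 < q) (hψ : IsCHModel ψ)
    (hu : IsRadialSolution n p q ψ ⊤ α u) {r : ℝ} (hr : 0 < r) :
    HasDerivAt (pohozaevP n p q ψ u) (Kfun n p q ψ r * |deriv u r| ^ p) r := by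
  have hp0 : p - 1 ≠ 0 := (sub_pos.2 hp).ne'
  have hpp : p ≠ 0 := by linarith
  have hq1 : q + 1 ≠ 0 := by linarith
  have hur := hu.u_pos hr.le
  have hpow : HasDerivAt (fun s => u s ^ (q + 1)) (deriv u r * (q + 1) * u r ^ q) r := by
    simpa using (hu.hasDerivAt hr.le).rpow_const (p := q + 1) (Or.inl hur.ne')
  have hF : HasDerivAt (energyF p q u)
      (-(((n - 1 : ℕ) : ℝ) * (deriv ψ r / ψ r) * |deriv u r| ^ p)) r := by
    refine (((hu.hasDerivAt_abs_deriv_rpow hp hψ hr).const_mul ((p - 1) / p)).add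
      (hpow.div_const (q + 1))).congr_deriv ?_
    rw [hu.deriv_eq_neg_abs hp hψ hr, abs_neg, abs_abs]
    field_simp
    ring
  have hV := hasDerivAt_modelVol (m := n - 1) hψ r
  have hW := ((hu.hasDerivAt_flux hr).mul (hu.hasDerivAt hr.le)).div_const (q + 1)
  have hfun : pohozaevP n p q ψ u = fun s => modelVol (n - 1) ψ s * energyF p q u s -
      flux n p ψ u s * u s / (q + 1) := by
    funext s
    simp only [pohozaevP, modelVol, flux]
    ring
  rw [hfun]
  refine ((hV.mul hF).sub hW).congr_deriv ?_
  have hE := hu.energy_density_eq hp hψ hr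
  have hu1 : u r ^ (q + 1) = u r ^ q * u r := Real.rpow_add_one hur.ne' q
  have hWu : flux n p ψ u r * deriv u r = -(|deriv u r| ^ p * ψ r ^ (n - 1)) := by
    rw [hE]
    nth_rw 1 [hu.deriv_eq_neg_abs hp hψ hr]
    ring
  rw [hWu, Kfun, energyF, hu1, Nat.cast_sub hn, modelVol]
  push_cast
  ring

lemma continuousOn_pohozaevP (hp : 1 < p) (hq : 0 < q) (hψ : IsCHModel ψ)
    (hu : IsRadialSolution n p q ψ ⊤ α u) :
    ContinuousOn (pohozaevP n p q ψ u) (Set.Ici 0) := by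
  have hF : ContinuousOn (energyF p q u) (Set.Ici 0) :=
    ((hu.continuousOn_deriv.abs.rpow_const fun _ _ => Or.inr (by linarith)).const_mul _).add
      ((hu.continuousOn.rpow_const fun _ _ => Or.inr (by linarith)).div_const _)
  refine (((continuous_modelVol (m := n - 1) hψ).continuousOn.mul hF).sub
    (((hu.continuousOn_flux hp hψ).mul hu.continuousOn).div_const (q + 1))).congr ?_
  intro s _
  simp only [pohozaevP, modelVol, flux, Pi.mul_apply, Pi.sub_apply]
  ring

lemma pohozaevP_zero (hu : IsRadialSolution n p q ψ ⊤ α u) : pohozaevP n p q ψ u 0 = 0 := by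
  simp [pohozaevP, hu.deriv_init]

lemma hasDerivAt_energy (hp : 1 < p) (hψ : IsCHModel ψ)
    (hu : IsRadialSolution n p q ψ ⊤ α u) {r : ℝ} (hr : 0 < r) :
    HasDerivAt (fun R : ℝ => ∫ s in (0:ℝ)..R, |deriv u s| ^ p * ψ s ^ (n - 1))
      (flux n p ψ u r * |deriv u r|) r := by
  have hc : ContinuousOn (fun s => |deriv u s| ^ p * ψ s ^ (n - 1)) (Set.Ici 0) :=
    (hu.continuousOn_deriv.abs.rpow_const fun _ _ => Or.inr (by linarith)).mul
      (hψ.continuous.pow _).continuousOn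
  rw [← hu.energy_density_eq hp hψ hr]
  refine intervalIntegral.integral_hasDerivAt_right ?_ ?_ ?_
  · refine ContinuousOn.intervalIntegrable (hc.mono ?_)
    rw [Set.uIcc_of_le hr.le]
    exact Set.Icc_subset_Ici_self
  · exact (hc.mono Set.Ioi_subset_Ici_self).stronglyMeasurableAtFilter isOpen_Ioi r hr
  · exact hc.continuousAt (Ici_mem_nhds hr)

/-- A solution bounded away from zero has infinite energy. -/
lemma tendsto_energy_of_le (hp : 1 < p) (hq : 0 < q) (hψ : IsCHModel ψ)
    (hu : IsRadialSolution n p q ψ ⊤ α u) {l : ℝ} (hl : 0 < l) (hlu : ∀ r, 0 ≤ r → l ≤ u r) :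
    Tendsto (fun R : ℝ => ∫ r in (0:ℝ)..R, |deriv u r| ^ p * ψ r ^ (n - 1)) atTop atTop := by
  have hp0 : 0 < p - 1 := sub_pos.2 hp
  set E : ℝ → ℝ := fun R => ∫ r in (0:ℝ)..R, |deriv u r| ^ p * ψ r ^ (n - 1) with hE
  set V : ℝ → ℝ := modelVol (n - 1) ψ with hV
  have hlq : 0 < l ^ q := Real.rpow_pos_of_pos hl q
  have hWV : ∀ r, 0 ≤ r → l ^ q * V r ≤ flux n p ψ u r := by
    intro r hr
    have h := monotoneOn_Ici_of_hasDerivAt_nonneg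
      ((hu.continuousOn_flux hp hψ).sub ((continuous_modelVol hψ).continuousOn.const_mul (l ^ q)))
      (fun x hx => (hu.hasDerivAt_flux hx).sub
        ((hasDerivAt_modelVol (m := n - 1) hψ x).const_mul (l ^ q)))
      (fun x hx => by
        rw [sub_nonneg, mul_comm]
        exact mul_le_mul_of_nonneg_left (Real.rpow_le_rpow hl.le (hlu x hx.le) hq.le)
          (pow_pos (hψ.pos hx) _).le)
      Set.self_mem_Ici hr hr
    simp only [Pi.sub_apply, hu.flux_zero, modelVol_zero, mul_zero, sub_zero] at h
    simpa using h
  set c : ℝ := l ^ q * (l ^ q) ^ (1 / (p - 1)) with hcdef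
  have hc : 0 < c := by positivity
  have hlow : ∀ r, 0 < r →
      c * (V r * (V r / ψ r ^ (n - 1)) ^ (1 / (p - 1))) ≤ flux n p ψ u r * |deriv u r| := by
    intro r hr
    have hVr : 0 < V r := modelVol_pos hψ hr
    have hψm : 0 < ψ r ^ (n - 1) := pow_pos (hψ.pos hr) _
    have hY : (l ^ q * (V r / ψ r ^ (n - 1))) ^ (1 / (p - 1)) ≤ |deriv u r| := by
      have h1 : l ^ q * (V r / ψ r ^ (n - 1)) ≤ |deriv u r| ^ (p - 1) := by
        rw [← mul_div_assoc, div_le_iff₀ hψm, mul_comm (|deriv u r| ^ (p - 1)),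
          ← hu.flux_eq hp hψ hr]
        exact hWV r hr.le
      calc _ ≤ (|deriv u r| ^ (p - 1)) ^ (1 / (p - 1)) :=
            Real.rpow_le_rpow (by positivity) h1 (by positivity)
        _ = |deriv u r| := by
            rw [← Real.rpow_mul (abs_nonneg _), mul_one_div_cancel hp0.ne', Real.rpow_one]
    rw [Real.mul_rpow hlq.le (by positivity)] at hY
    calc c * (V r * (V r / ψ r ^ (n - 1)) ^ (1 / (p - 1)))
        = (l ^ q * V r) * ((l ^ q) ^ (1 / (p - 1)) * (V r / ψ r ^ (n - 1)) ^ (1 / (p - 1))) := by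
          rw [hcdef]; ring
      _ ≤ flux n p ψ u r * |deriv u r| :=
          mul_le_mul (hWV r hr.le) hY (by positivity) (hu.flux_pos hp hψ hr).le
  have hdichotomy : ∀ r, 0 < r → 1 ≤ V r * (V r / ψ r ^ (n - 1)) ^ (1 / (p - 1)) +
      ψ r ^ (n - 1) * V r ^ (-p) := by
    intro r hr
    have hVr : 0 < V r := modelVol_pos hψ hr
    have hψm : 0 < ψ r ^ (n - 1) := pow_pos (hψ.pos hr) _
    set X := V r * (V r / ψ r ^ (n - 1)) ^ (1 / (p - 1)) with hX
    have hXpos : 0 < X := by positivity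
    have hXY : ψ r ^ (n - 1) * V r ^ (-p) = X ^ (-(p - 1)) := by
      rw [hX, Real.mul_rpow hVr.le (by positivity), ← Real.rpow_mul (by positivity),
        show 1 / (p - 1) * -(p - 1) = -1 by field_simp, Real.rpow_neg_one, inv_div,
        show -(p - 1) = -p + 1 by ring, Real.rpow_add_one hVr.ne']
      field_simp
    rw [hXY]
    rcases le_total 1 X with h | h
    · linarith [Real.rpow_pos_of_pos hXpos (-(p - 1))]
    · linarith [Real.one_le_rpow_of_pos_of_le_one_of_nonpos hXpos h (by linarith : -(p - 1) ≤ 0)]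
  set H : ℝ → ℝ := fun r => E r - c * r - c / (p - 1) * V r ^ (-(p - 1)) with hH
  have hHd : ∀ r, 0 < r → HasDerivAt H
      (flux n p ψ u r * |deriv u r| - c + c * (ψ r ^ (n - 1) * V r ^ (-p))) r := by
    intro r hr
    have hVr : 0 < V r := modelVol_pos hψ hr
    have h := ((hu.hasDerivAt_energy hp hψ hr).sub ((hasDerivAt_id r).const_mul c)).sub
      (((hasDerivAt_modelVol (m := n - 1) hψ r).rpow_const (p := -(p - 1))
        (Or.inl hVr.ne')).const_mul (c / (p - 1)))
    refine h.congr_deriv ?_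
    rw [show -(p - 1) - 1 = -p by ring]
    field_simp
    ring
  have hmono : MonotoneOn H (Set.Ici 1) :=
    monotoneOn_Ici_of_hasDerivAt_nonneg
      (fun r hr => (hHd r (zero_lt_one.trans_le hr)).continuousAt.continuousWithinAt)
      (fun x hx => hHd x (zero_lt_one.trans hx))
      (fun x hx => by
        have hx0 := zero_lt_one.trans hx
        nlinarith [hlow x hx0, hdichotomy x hx0])
  refine tendsto_atTop_mono' atTop ?_
    (tendsto_atTop_add_const_left atTop (H 1) (tendsto_id.const_mul_atTop hc))
  filter_upwards [eventually_ge_atTop 1] with r hr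
  have h := hmono Set.self_mem_Ici hr hr
  have hVr : 0 < V r := modelVol_pos hψ (zero_lt_one.trans_le hr)
  have hpos : 0 < c / (p - 1) * V r ^ (-(p - 1)) := by positivity
  have hHr : H r = E r - c * r - c / (p - 1) * V r ^ (-(p - 1)) := rfl
  simp only [id]
  linarith

/-- A solution vanishing at infinity has infinite energy once `flux * u` is bounded below. -/
lemma tendsto_energy_of_flux_mul_ge (hp : 1 < p) (hψ : IsCHModel ψ)
    (hu : IsRadialSolution n p q ψ ⊤ α u) (h0 : Tendsto u atTop (𝓝 0)) {k a : ℝ} (hk : 0 < k)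
    (ha : 0 < a) (hW : ∀ r, a ≤ r → k ≤ flux n p ψ u r * u r) :
    Tendsto (fun R : ℝ => ∫ r in (0:ℝ)..R, |deriv u r| ^ p * ψ r ^ (n - 1)) atTop atTop := by
  set E : ℝ → ℝ := fun R => ∫ r in (0:ℝ)..R, |deriv u r| ^ p * ψ r ^ (n - 1) with hE
  set H : ℝ → ℝ := fun r => E r + k * Real.log (u r) with hH
  have hHd : ∀ r, 0 < r → HasDerivAt H
      (flux n p ψ u r * |deriv u r| + k * (deriv u r / u r)) r := fun r hr =>
    (hu.hasDerivAt_energy hp hψ hr).add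
      (((hu.hasDerivAt hr.le).log (hu.u_pos hr.le).ne').const_mul k)
  have hmono : MonotoneOn H (Set.Ici a) :=
    monotoneOn_Ici_of_hasDerivAt_nonneg
      (fun r hr => (hHd r (ha.trans_le hr)).continuousAt.continuousWithinAt)
      (fun x hx => hHd x (ha.trans hx))
      (fun x hx => by
        have hx0 := ha.trans hx
        have hux := hu.u_pos hx0.le
        have hY := hu.abs_deriv_pos hp hψ hx0
        have hd := hu.deriv_eq_neg_abs hp hψ hx0
        have : flux n p ψ u x * |deriv u x| + k * (deriv u x / u x) =
            (flux n p ψ u x * u x - k) * (|deriv u x| / u x) := by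
          nth_rw 2 [hd]
          field_simp
          ring
        rw [this]
        exact mul_nonneg (sub_nonneg.2 (hW x hx.le)) (by positivity))
  have hlog : Tendsto (fun r => Real.log (u r)) atTop atBot :=
    Real.tendsto_log_nhdsGT_zero.comp (tendsto_nhdsWithin_iff.2 ⟨h0, by
      filter_upwards [eventually_ge_atTop 0] with r hr using hu.u_pos hr⟩)
  refine tendsto_atTop_mono' atTop ?_ (tendsto_atTop_add_const_left atTop (H a)
    (tendsto_neg_atBot_atTop.comp (hlog.const_mul_atBot hk)))
  filter_upwards [eventually_ge_atTop a] with r hr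
  have h := hmono Set.self_mem_Ici hr hr
  have hHr : H r = E r + k * Real.log (u r) := rfl
  simp only [Function.comp]
  linarith

end IsRadialSolution

lemma Kfun_le {n : ℕ} {p q : ℝ} {ψ : ℝ → ℝ} (hn : 2 ≤ n) (hp1 : 1 < p) (hpn : p < n)
    (hq : (n : ℝ) * p / ((n : ℝ) - p) - 1 ≤ q) {r : ℝ} (hψr : 0 < ψ r) :
    Kfun n p q ψ r ≤ -(((n : ℝ) - 1) / (n * ψ r) * volDefect (n - 1) ψ r) := by
  have hn0 : (0 : ℝ) < n := by linarith
  have hnp : (0 : ℝ) < n - p := sub_pos.2 hpn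
  have hp0 : 0 < p := by linarith
  have hcoef : 1 / (q + 1) ≤ (n - p) / (n * p) := by
    have h := one_div_le_one_div_of_le (by positivity) (sub_le_iff_le_add.1 hq)
    rwa [one_div_div] at h
  have hsum : (p - 1) / p + (n - p) / (n * p) = ((n : ℝ) - 1) / n := by
    field_simp
    ring
  have hle : (p - 1) / p + 1 / (q + 1) ≤ ((n : ℝ) - 1) / n := by linarith
  have h := mul_le_mul_of_nonneg_right hle (pow_pos hψr (n - 1)).le
  have hcast : ((n - 1 : ℕ) : ℝ) = n - 1 := by
    rw [Nat.cast_sub (by omega)]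
    simp
  have hrhs : -(((n : ℝ) - 1) / (n * ψ r) * volDefect (n - 1) ψ r) =
      ((n : ℝ) - 1) / n * ψ r ^ (n - 1) -
        ((n : ℝ) - 1) * (deriv ψ r / ψ r) * ∫ s in (0:ℝ)..r, ψ s ^ (n - 1) := by
    rw [volDefect, hcast, modelVol, pow_succ]
    field_simp
    ring
  rw [hrhs, Kfun]
  linarith

lemma IsRadialSolution.exists_le_flux_mul {n : ℕ} {p q α : ℝ} {ψ u : ℝ → ℝ} (hn : 2 ≤ n)
    (hp1 : 1 < p) (hpn : p < n) (hq : (n : ℝ) * p / ((n : ℝ) - p) - 1 ≤ q) (hq0 : 0 < q)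
    (hψ : IsCHModel ψ) (hu : IsRadialSolution n p q ψ ⊤ α u)
    (hD : ∃ r, 0 < r ∧ 0 < volDefect (n - 1) ψ r) :
    ∃ k a : ℝ, 0 < k ∧ 0 < a ∧ ∀ r, a ≤ r → k ≤ flux n p ψ u r * u r := by
  obtain ⟨b, hb, hDb⟩ := hD
  have hn1 : (0 : ℝ) < n - 1 := by linarith
  have hn0 : (0 : ℝ) < n := by linarith
  have hcont := hu.continuousOn_pohozaevP hp1 hq0 hψ
  have hderiv : ∀ x, 0 < x →
      HasDerivAt (-pohozaevP n p q ψ u) (-(Kfun n p q ψ x * |deriv u x| ^ p)) x := fun x hx =>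
    (hu.hasDerivAt_pohozaevP (by omega) hp1 hq0 hψ hx).neg
  have hmono : MonotoneOn (-pohozaevP n p q ψ u) (Set.Ici 0) :=
    monotoneOn_Ici_of_hasDerivAt_nonneg hcont.neg hderiv fun x hx => by
      have hψx := hψ.pos hx
      have hK := Kfun_le hn hp1 hpn hq hψx
      have hDx := volDefect_nonneg (m := n - 1) hψ hx.le
      have : 0 ≤ ((n : ℝ) - 1) / (n * ψ x) * volDefect (n - 1) ψ x := by positivity
      rw [neg_nonneg]
      exact mul_nonpos_of_nonpos_of_nonneg (by linarith) (by positivity)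
  have hstrict : StrictMonoOn (-pohozaevP n p q ψ u) (Set.Ici b) :=
    strictMonoOn_Ici_of_hasDerivAt_pos (hcont.neg.mono (Set.Ici_subset_Ici.2 hb.le))
      (fun x hx => hderiv x (hb.trans hx)) fun x hx => by
      have hx0 := hb.trans hx
      have hψx := hψ.pos hx0
      have hK := Kfun_le hn hp1 hpn hq hψx
      have hDx : 0 < volDefect (n - 1) ψ x :=
        hDb.trans_le (monotoneOn_volDefect hψ hb.le hx0.le hx.le)
      have : 0 < ((n : ℝ) - 1) / (n * ψ x) * volDefect (n - 1) ψ x := by positivity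
      rw [neg_pos]
      exact mul_neg_of_neg_of_pos (by linarith)
        (Real.rpow_pos_of_pos (hu.abs_deriv_pos hp1 hψ hx0) p)
  have hb1 : b < b + 1 := lt_add_one b
  have hPb : 0 ≤ (-pohozaevP n p q ψ u) b := by
    have h := hmono Set.self_mem_Ici hb.le hb.le
    simpa only [Pi.neg_apply, hu.pohozaevP_zero, neg_zero] using h
  have hPb1 := hPb.trans_lt (hstrict Set.self_mem_Ici hb1.le hb1)
  refine ⟨(q + 1) * (-pohozaevP n p q ψ u) (b + 1), b + 1, by positivity, by positivity, ?_⟩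
  intro r hr
  have hr0 : 0 < r := by linarith
  have h := hmono (Set.mem_Ici.2 (by positivity)) hr0.le hr
  have hur := hu.u_pos hr0.le
  have hVF : 0 ≤ modelVol (n - 1) ψ r * energyF p q u r := by
    refine mul_nonneg (modelVol_pos hψ hr0).le ?_
    have : 0 < p - 1 := sub_pos.2 hp1
    rw [energyF]
    positivity
  have hP : (-pohozaevP n p q ψ u) r =
      -(modelVol (n - 1) ψ r * energyF p q u r) + flux n p ψ u r * u r / (q + 1) := by
    simp only [Pi.neg_apply, pohozaevP, modelVol, flux]
    ring
  rw [← le_div_iff₀' (by positivity)]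
  linarith

/-- in the `p`-stochastically incomplete case, every global radial
solution has infinite energy. -/
theorem statement_11 (n : ℕ) (hn : 2 ≤ n) (p q : ℝ) (hp1 : 1 < p) (hpn : p < n)
    (hq : (n : ℝ) * p / ((n : ℝ) - p) - 1 ≤ q)
    (ψ : ℝ → ℝ) (hψ : IsCHModel ψ)
    (hpi : IntegrableOn (fun s : ℝ => Theta n ψ s ^ (1 / (p - 1))) (Set.Ioi (0:ℝ)))
    (α : ℝ) (hα : 0 < α)
    (u : ℝ → ℝ) (hu : IsRadialSolution n p q ψ ⊤ α u) :
    Tendsto (fun R : ℝ => ∫ r in (0:ℝ)..R, |deriv u r| ^ p * ψ r ^ (n - 1))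
      atTop atTop := by
  have hnp : (0 : ℝ) < n - p := sub_pos.2 hpn
  have hq0 : 0 < q := by
    have h : 1 < (n : ℝ) * p / (n - p) := by
      rw [one_lt_div hnp]
      nlinarith
    linarith
  have hD := exists_volDefect_pos (m := n - 1) hψ (by have := sub_pos.2 hp1; positivity) hpi
  by_cases hl : ∃ l, 0 < l ∧ ∀ r, 0 ≤ r → l ≤ u r
  · obtain ⟨l, hl, hlu⟩ := hl
    exact hu.tendsto_energy_of_le hp1 hq0 hψ hl hlu
  · push Not at hl
    obtain ⟨k, a, hk, ha, hW⟩ := hu.exists_le_flux_mul hn hp1 hpn hq hq0 hψ hD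
    refine hu.tendsto_energy_of_flux_mul_ge hp1 hψ ?_ hk ha hW
    rw [Metric.tendsto_atTop]
    intro ε hε
    obtain ⟨r, hr, hur⟩ := hl ε hε
    refine ⟨r, fun s hs => ?_⟩
    rw [Real.dist_eq, sub_zero, abs_of_pos (hu.u_pos (hr.trans hs))]
    exact (hu.antitoneOn hp1 hψ hr (hr.trans hs) hs).trans_lt hur
end
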